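/- arXiv:2105.07670 — 2 statements merged into one kernel-verified Lean document; each statement's English description precedes it below -/
import Mathlib

section
/- Let A ≤ B be integers, D = B − A, M = max{|A|, |B|}. Let F ∈ ℚ(X) be a rational fraction of degree at most d ≥ 1, let S be a set of integers in [A, B] containing no poles of F, let η ≥ 1 be a real number, and let H ≥ max{4, log(2M)}. Assume: (1) h(F(x)) ≤ H for every x ∈ S; (2) S contains at least D/η elements; (3) D ≥ max{η·d³·H, 4·η·d}. Then h(F) ≤ H + 960·η·d·log(η·d·H) + d·log(2M) + log(d+1). -/
open Polynomial

/-- The height of a rational number `q = p/q` in lowest terms: `h(x) = log max{|p|, |q|}`. -/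
noncomputable def ratHeight (q : ℚ) : ℝ := Real.log (max |(q.num : ℝ)| (q.den : ℝ))

/-- The height of the rational fraction `F = P/Q` in lowest terms (`P, Q ∈ ℤ[X]` coprime):
the maximum of `log |c|` over the nonzero coefficients `c` of `P` and `Q`; since some
coefficient of `Q` is a nonzero integer, this maximum equals
`log (max over all coefficients of |c|)`. -/
noncomputable def fracHeight (P Q : Polynomial ℤ) : ℝ :=
  Real.log (max (⨆ i, |(P.coeff i : ℝ)|) (⨆ i, |(Q.coeff i : ℝ)|))


lemma newton_vals (p : ℕ) [Fact p.Prime] (I : Finset ℤ) (hI : I.Nonempty) (d : ℕ) :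
    ∀ F : ℤ[X], F.natDegree ≤ d → ¬ (C (p:ℤ) ∣ F) →
    ∃ a : Fin d → ℤ, (∀ i, a i ∈ I) ∧ ∀ x ∈ I, (∀ i, x ≠ a i) → ∀ k : ℕ,
      (p:ℤ)^k ∣ F.eval x → k ≤ ∑ i, padicValInt p (x - a i) := by
  have hp : p.Prime := Fact.out
  induction d with
  | zero =>
    intro F hF hC
    refine ⟨fun i => i.elim0, fun i => i.elim0, ?_⟩
    intro x _ _ k hk
    rw [Polynomial.eq_C_of_natDegree_le_zero hF] at hk hC
    rw [eval_C] at hk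
    by_contra hne
    have hk0 : k ≠ 0 := by rintro rfl; simp at hne
    exact hC (map_dvd C ((dvd_pow_self (p:ℤ) hk0).trans hk))
  | succ d ih =>
    intro F hF hC
    obtain ⟨a, haI, ha⟩ := Finset.exists_max_image I (fun x => emultiplicity (p:ℤ) (F.eval x)) hI
    set F1 := F /ₘ (X - C a) with hF1
    have hdec : F = C (F.eval a) + (X - C a) * F1 := by
      conv_lhs => rw [← modByMonic_add_div F (X - C a)]
      rw [modByMonic_X_sub_C_eq_C_eval]
    have hdeg : F1.natDegree ≤ d := by
      rw [hF1, natDegree_divByMonic _ (monic_X_sub_C a), natDegree_X_sub_C]; omega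
    have hmax : ∀ x ∈ I, ∀ k : ℕ, (p:ℤ)^k ∣ F.eval x → (p:ℤ)^k ∣ F.eval a := by
      intro x hx k hk
      exact pow_dvd_of_le_emultiplicity ((le_emultiplicity_of_pow_dvd hk).trans (ha x hx))
    by_cases h1 : C (p:ℤ) ∣ F1
    · refine ⟨fun _ => a, fun _ => haI, ?_⟩
      intro x hx _ k hk
      by_contra hne
      have hk0 : k ≠ 0 := by rintro rfl; simp at hne
      have h2 := (dvd_pow_self (p:ℤ) hk0).trans (hmax x hx k hk)
      apply hC
      rw [hdec]
      exact dvd_add (map_dvd C h2) (h1.mul_left _)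
    · obtain ⟨b, hb, hb'⟩ := ih F1 hdeg h1
      refine ⟨Fin.cons a b, ?_, ?_⟩
      · intro i
        refine Fin.cases ?_ ?_ i
        · simpa using haI
        · intro j; simpa using hb j
      · intro x hx hne k hk
        have hxa : x ≠ a := by simpa using hne 0
        have hxb : ∀ i, x ≠ b i := fun i => by simpa using hne i.succ
        have hsub : x - a ≠ 0 := sub_ne_zero.mpr hxa
        have h3 : (p:ℤ)^k ∣ (x - a) * F1.eval x := by
          have h4 : F.eval x = F.eval a + (x - a) * F1.eval x := by
            conv_lhs => rw [hdec]
            simp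
          have := dvd_sub hk (hmax x hx k hk)
          rwa [h4, add_sub_cancel_left] at this
        rw [Fin.sum_univ_succ]
        simp only [Fin.cons_zero, Fin.cons_succ]
        set j := padicValInt p (x - a) with hj
        have h5 : (p:ℤ)^(k - j) ∣ F1.eval x := by
          rcases le_total k j with h | h
          · simp [Nat.sub_eq_zero_of_le h]
          obtain ⟨u, hu⟩ : (p:ℤ)^j ∣ x - a := by
            rw [padicValInt_dvd_iff]; right; exact le_rfl
          have hpu : ¬ (p:ℤ) ∣ u := by
            rintro ⟨w, rfl⟩
            have : (p:ℤ)^(j+1) ∣ x - a := ⟨w, by rw [hu]; ring⟩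
            rw [padicValInt_dvd_iff] at this
            rcases this with h | h
            · exact hsub h
            · omega
          have hpp : Prime (p:ℤ) := Nat.prime_iff_prime_int.mp hp
          rw [hu, ← Nat.add_sub_cancel' h, pow_add, mul_assoc] at h3
          have h6 := (mul_dvd_mul_iff_left (pow_ne_zero j hpp.ne_zero)).mp h3
          exact (hpp.coprime_iff_not_dvd.mpr hpu).pow_left.dvd_of_dvd_mul_left h6
        have := hb' x hx hxb _ h5
        omega

lemma sum_val_le (p : ℕ) [Fact p.Prime] (A B a : ℤ) (hA : A ≤ a) (hB : a ≤ B) :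
    ((p:ℝ) - 1) * ∑ x ∈ (Finset.Icc A B).erase a, (padicValInt p (x - a) : ℝ) ≤ B - A := by
  have hp : p.Prime := Fact.out
  have key : ∀ n : ℕ, ((p:ℝ)-1) * ∑ i ∈ Finset.Icc 1 n, (padicValNat p i : ℝ) ≤ n := by
    intro n
    have h1 : ∑ i ∈ Finset.Icc 1 n, padicValNat p i = padicValNat p n.factorial := by
      induction n with
      | zero => simp
      | succ n ih =>
        rw [Finset.sum_Icc_succ_top (by omega), ih, Nat.factorial_succ,
          padicValNat.mul (by omega) (Nat.factorial_ne_zero n)]; ring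
    have h2 := sub_one_mul_padicValNat_factorial (p := p) n
    have h3 : (p - 1) * padicValNat p n.factorial ≤ n := by omega
    have h4 : (((p - 1 : ℕ) : ℝ)) * (padicValNat p n.factorial : ℝ) ≤ n := by exact_mod_cast h3
    rw [Nat.cast_sub hp.one_le] at h4
    rw [← Nat.cast_sum, h1]
    simpa using h4
  obtain ⟨m, hm⟩ := Int.eq_ofNat_of_zero_le (sub_nonneg.mpr hA)
  obtain ⟨n, hn⟩ := Int.eq_ofNat_of_zero_le (sub_nonneg.mpr hB)
  have hsplit : (Finset.Icc A B).erase a =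
      (Finset.Icc 1 m).image (fun i : ℕ => a - i) ∪ (Finset.Icc 1 n).image (fun i : ℕ => a + i) := by
    ext x
    simp only [Finset.mem_erase, Finset.mem_Icc, Finset.mem_union, Finset.mem_image]
    constructor
    · rintro ⟨h1, h2, h3⟩
      rcases lt_or_gt_of_ne h1 with h | h
      · left; exact ⟨(a - x).toNat, by omega, by omega⟩
      · right; exact ⟨(x - a).toNat, by omega, by omega⟩
    · rintro (⟨i, hi, rfl⟩ | ⟨i, hi, rfl⟩) <;> omega
  rw [hsplit, Finset.sum_union, Finset.sum_image, Finset.sum_image]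
  · have e1 : ∀ i : ℕ, padicValInt p (a - i - a) = padicValNat p i := by
      intro i; simp [padicValInt]
    have e2 : ∀ i : ℕ, padicValInt p (a + i - a) = padicValNat p i := by
      intro i; simp [padicValInt]
    simp only [e1, e2]
    have k1 := key m
    have k2 := key n
    have : (B:ℝ) - A = m + n := by
      have : B - A = m + n := by linarith
      exact_mod_cast this
    rw [this, mul_add]; linarith
  · intro i _ j _ h; simpa using h
  · intro i _ j _ h; simpa using h
  · rw [Finset.disjoint_left]
    simp only [Finset.mem_image, Finset.mem_Icc]
    rintro x ⟨i, hi, rfl⟩ ⟨j, hj, h⟩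
    omega

lemma coprime_rat (P Q : ℤ[X]) (hcop : IsRelPrime P Q) (hQ : Q ≠ 0) :
    IsCoprime (P.map (Int.castRingHom ℚ)) (Q.map (Int.castRingHom ℚ)) := by
  rw [← isRelPrime_iff_isCoprime]
  intro E hEP hEQ
  have hE0 : E ≠ 0 := by
    rintro rfl
    rw [zero_dvd_iff, Polynomial.map_eq_zero_iff (RingHom.injective_int _)] at hEQ
    exact hQ hEQ
  apply isUnit_or_eq_zero_of_isUnit_integerNormalization_primPart (R := ℤ) hE0
  set N := IsLocalization.integerNormalization (nonZeroDivisors ℤ) E with hN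
  obtain ⟨c, c0, hc⟩ := IsLocalization.integerNormalization_spec (nonZeroDivisors ℤ) E
  rw [← hN] at hc
  have hc0 : (c:ℚ) ≠ 0 := by exact_mod_cast nonZeroDivisors.ne_zero c0
  have hd : N.primPart.map (Int.castRingHom ℚ) ∣ E := by
    have h1 : N.primPart.map (Int.castRingHom ℚ) ∣ N.map (Int.castRingHom ℚ) :=
      Polynomial.map_dvd _ (N.primPart_dvd)
    have h2 : N.map (Int.castRingHom ℚ) = C (c:ℚ) * E := by
      have : (N.map (algebraMap ℤ ℚ)) = _ := hc
      rw [algebraMap_int_eq] at this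
      rw [this]
      ext i; simp
    rw [h2] at h1
    exact (IsUnit.dvd_mul_left (isUnit_C.mpr (isUnit_iff_ne_zero.mpr hc0))).mp h1
  exact hcop ((IsPrimitive.Int.dvd_iff_map_cast_dvd_map_cast _ _ N.isPrimitive_primPart).mpr (hd.trans hEP))
    ((IsPrimitive.Int.dvd_iff_map_cast_dvd_map_cast _ _ N.isPrimitive_primPart).mpr (hd.trans hEQ))

lemma exists_res (P Q : ℤ[X]) (hcop : IsRelPrime P Q) (hQ : Q ≠ 0) (d : ℕ) (hd : 1 ≤ d)
    (hP : P.natDegree ≤ d) (hQd : Q.natDegree ≤ d) (c : ℝ) (hc : 1 ≤ c)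
    (hPc : ∀ i, |(P.coeff i : ℝ)| ≤ c) (hQc : ∀ i, |(Q.coeff i : ℝ)| ≤ c) :
    ∃ R : ℕ, R ≠ 0 ∧ (R:ℝ) ≤ (2 * d * c) ^ (2 * d) ∧
      ∀ x : ℤ, Int.gcd (P.eval x) (Q.eval x) ∣ R := by
  have hne : P.resultant Q ≠ 0 := by
    intro h0
    have h1 := resultant_map_map P Q P.natDegree Q.natDegree (Int.castRingHom ℚ)
    rw [h0, map_zero] at h1
    have h2 := resultant_eq_zero_iff (f := P.map (Int.castRingHom ℚ)) (g := Q.map (Int.castRingHom ℚ))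
    rw [natDegree_map_eq_of_injective (RingHom.injective_int _),
      natDegree_map_eq_of_injective (RingHom.injective_int _)] at h2
    exact (h2.mp h1).2 (coprime_rat P Q hcop hQ)
  refine ⟨(P.resultant Q).natAbs, by simpa using hne, ?_, ?_⟩
  · have hdet := Matrix.det_le (A := (Int.castRingHom ℝ).mapMatrix (P.sylvester Q P.natDegree Q.natDegree))
      (abv := AbsoluteValue.abs) (x := c) (by
        intro i j
        induction j using Fin.addCases <;>
        · simp only [sylvester, RingHom.mapMatrix_apply, Matrix.map_apply, Matrix.of_apply,
            Fin.addCases_left, Fin.addCases_right, AbsoluteValue.abs_apply]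
          split_ifs
          · first | exact hPc _ | exact hQc _
          · simp; linarith)
    rw [← RingHom.map_det, AbsoluteValue.abs_apply, Fintype.card_fin] at hdet
    have e : (((P.resultant Q).natAbs : ℕ) : ℝ) = |(Int.castRingHom ℝ) (P.sylvester Q P.natDegree Q.natDegree).det| := by
      rw [resultant, Nat.cast_natAbs]; simp
    rw [e]
    refine hdet.trans ?_
    set n := P.natDegree + Q.natDegree
    have hn : n ≤ 2 * d := by omega
    have h2d : (1:ℝ) ≤ 2 * d := by
      have : (1:ℝ) ≤ d := by exact_mod_cast hd
      linarith
    have h1 : ((n.factorial : ℕ):ℝ) ≤ (2 * d : ℝ) ^ (2 * d) := by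
      have : n.factorial ≤ (2 * d)^(2*d) := (Nat.factorial_le hn).trans (Nat.factorial_le_pow _)
      exact_mod_cast this
    have h2 : c ^ n ≤ c ^ (2 * d) := pow_le_pow_right₀ hc hn
    rw [nsmul_eq_mul, mul_pow (2 * (d:ℝ)) c]
    gcongr
  · intro x
    by_cases h : P.natDegree ≠ 0 ∨ Q.natDegree ≠ 0
    · obtain ⟨u, v, -, -, huv⟩ := exists_mul_add_mul_eq_C_resultant P Q le_rfl le_rfl h
      have := congrArg (eval x) huv
      simp only [eval_add, eval_mul, eval_C] at this
      rw [← Int.natCast_dvd, ← this]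
      exact dvd_add ((Int.gcd_dvd_left _ _).mul_right _) ((Int.gcd_dvd_right _ _).mul_right _)
    · push Not at h
      have hPC := eq_C_of_natDegree_eq_zero h.1
      have hQC := eq_C_of_natDegree_eq_zero h.2
      set g := Int.gcd (P.eval x) (Q.eval x) with hg
      have e1 : P.eval x = P.coeff 0 := by rw [hPC]; simp
      have e2 : Q.eval x = Q.coeff 0 := by rw [hQC]; simp
      have h1 : C (g:ℤ) ∣ P := by
        rw [hPC]; apply _root_.map_dvd C; rw [← e1]; exact Int.gcd_dvd_left _ _
      have h2 : C (g:ℤ) ∣ Q := by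
        rw [hQC]; apply _root_.map_dvd C; rw [← e2]; exact Int.gcd_dvd_right _ _
      have h3 := isUnit_C.mp (hcop h1 h2)
      rw [Int.isUnit_iff] at h3
      have : g = 1 := by omega
      rw [this]; exact one_dvd _

lemma prod_coeff_bound (M : ℝ) (hM : 0 ≤ M) (a : ℝ) (U : Finset ℝ)
    (hU : ∀ y ∈ U, |y| ≤ M ∧ 1 ≤ |a - y|) (k : ℕ) :
    |(∏ j ∈ U, Lagrange.basisDivisor a j).coeff k| ≤ (1 + M) ^ U.card := by
  induction U using Finset.induction_on generalizing k with
  | empty => simp [coeff_one]; split_ifs <;> simp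
  | insert y U hy ih =>
    have ih' := ih (fun z hz => hU z (Finset.mem_insert_of_mem hz))
    obtain ⟨h1, h2⟩ := hU y (Finset.mem_insert_self _ _)
    rw [Finset.prod_insert hy, Finset.card_insert_of_notMem hy, Lagrange.basisDivisor, mul_assoc,
      coeff_C_mul, abs_mul, sub_mul, coeff_sub, coeff_C_mul, abs_inv]
    set K := (1 + M) ^ U.card with hK
    have hK0 : 0 ≤ K := by positivity
    set f := ∏ j ∈ U, Lagrange.basisDivisor a j
    have h3 : |(X * f).coeff k| ≤ K := by
      cases k with
      | zero => simpa using hK0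
      | succ k => rw [coeff_X_mul]; exact ih' k
    have h4 : |y * f.coeff k| ≤ M * K := by
      rw [abs_mul]; exact mul_le_mul h1 (ih' k) (abs_nonneg _) hM
    have h5 : |a - y|⁻¹ ≤ 1 := inv_le_one_of_one_le₀ h2
    have h6 : |(X * f).coeff k - y * f.coeff k| ≤ K * (1 + M) := by
      refine (abs_sub _ _).trans ?_; linarith
    calc _ ≤ 1 * (K * (1 + M)) := mul_le_mul h5 h6 (abs_nonneg _) zero_le_one
      _ = _ := by rw [pow_succ, one_mul]

lemma coeff_bound (P : ℤ[X]) (d : ℕ) (hP : P.natDegree ≤ d) (T : Finset ℤ) (hT : T.card = d + 1)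
    (M Y : ℝ) (hM : 0 ≤ M) (hTM : ∀ x ∈ T, |(x:ℝ)| ≤ M) (hY : ∀ x ∈ T, |((P.eval x : ℤ):ℝ)| ≤ Y)
    (k : ℕ) : |(P.coeff k : ℝ)| ≤ (d + 1) * (Y * (1 + M) ^ d) := by
  classical
  set T' : Finset ℝ := T.image (fun x : ℤ => (x:ℝ)) with hT'
  have hinj : Function.Injective (fun x : ℤ => (x:ℝ)) := Int.cast_injective
  have hc : T'.card = d + 1 := by rw [hT', Finset.card_image_of_injective _ hinj, hT]
  set F := P.map (Int.castRingHom ℝ) with hF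
  have hdeg : F.degree < (T'.card : ℕ) := by
    rw [hc]
    refine lt_of_le_of_lt degree_le_natDegree ?_
    have : F.natDegree ≤ d := (natDegree_map_le).trans hP
    exact_mod_cast Nat.lt_succ_of_le this
  have hint := Lagrange.eq_interpolate (s := T') (v := id) (f := F) (Function.injective_id.injOn) hdeg
  have e : (P.coeff k : ℝ) = F.coeff k := by simp [hF]
  rw [e, hint, Lagrange.interpolate_apply, finsetSum_coeff]
  refine (Finset.abs_sum_le_sum_abs _ _).trans ?_
  have hb : ∀ x ∈ T', |(C (eval (id x) F) * Lagrange.basis T' id x).coeff k| ≤ Y * (1 + M) ^ d := by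
    intro x hx
    rw [coeff_C_mul, abs_mul]
    obtain ⟨z, hz, rfl⟩ := Finset.mem_image.mp hx
    have h1 : |eval (id (z:ℝ)) F| ≤ Y := by
      have : eval (id (z:ℝ)) F = ((P.eval z : ℤ):ℝ) := by
        simp [hF, eval_map]
        
      rw [this]; exact hY z hz
    have h2 := prod_coeff_bound M hM (z:ℝ) (T'.erase (z:ℝ)) (by
      intro y hy
      obtain ⟨hne, hy⟩ := Finset.mem_erase.mp hy
      obtain ⟨w, hw, rfl⟩ := Finset.mem_image.mp hy
      refine ⟨hTM w hw, ?_⟩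
      have : z - w ≠ 0 := by
        intro h; apply hne; rw [sub_eq_zero.mp h]
      exact_mod_cast Int.one_le_abs this) k
    rw [Finset.card_erase_of_mem hx, hc, Nat.add_sub_cancel] at h2
    exact mul_le_mul h1 h2 (abs_nonneg _) ((abs_nonneg _).trans h1)
  refine (Finset.sum_le_sum hb).trans ?_
  rw [Finset.sum_const, hc, nsmul_eq_mul]; push_cast; exact le_rfl

lemma log_eq_sum (n R : ℕ) (hR : R ≠ 0) (hn : n ∣ R) :
    Real.log n = ∑ p ∈ R.primeFactors, (padicValNat p n : ℝ) * Real.log p := by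
  have hn0 : n ≠ 0 := ne_zero_of_dvd_ne_zero hR hn
  have h1 : Real.log n = ∑ p ∈ n.primeFactors, (padicValNat p n : ℝ) * Real.log p := by
    conv_lhs => rw [← Nat.prod_factorization_pow_eq_self hn0]
    rw [Finsupp.prod, Nat.cast_prod, Real.log_prod]
    · apply Finset.sum_congr rfl
      intro p hp
      rw [Nat.support_factorization] at hp
      rw [Nat.cast_pow, Real.log_pow, Nat.factorization_def _ (Nat.prime_of_mem_primeFactors hp)]
    · intro p hp
      rw [Nat.support_factorization] at hp
      exact_mod_cast pow_ne_zero _ (Nat.prime_of_mem_primeFactors hp).ne_zero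
  rw [h1]
  apply Finset.sum_subset (Nat.primeFactors_mono hn hR)
  intro p hp hp'
  have : ¬ p ∣ n := fun h => hp' (Nat.mem_primeFactors.mpr ⟨Nat.prime_of_mem_primeFactors hp, h, hn0⟩)
  rw [padicValNat.eq_zero_of_not_dvd this]; simp

lemma mertens (n : ℕ) (hn : 1 ≤ n) :
    ∑ p ∈ (Finset.range (n+1)).filter Nat.Prime, Real.log p / ((p:ℝ) - 1) ≤ 4 * Real.log n := by
  have hnR : (0:ℝ) < n := by exact_mod_cast hn
  have h1 := log_eq_sum n.factorial n.factorial (Nat.factorial_ne_zero n) dvd_rfl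
  have hset : n.factorial.primeFactors = (Finset.range (n+1)).filter Nat.Prime := by
    ext p
    simp only [Nat.mem_primeFactors, Finset.mem_filter, Finset.mem_range]
    constructor
    · rintro ⟨hp, h, _⟩; exact ⟨by have := (hp.dvd_factorial).mp h; omega, hp⟩
    · rintro ⟨h, hp⟩; exact ⟨hp, (hp.dvd_factorial).mpr (by omega), Nat.factorial_ne_zero n⟩
  rw [hset] at h1
  have h2 : Real.log n.factorial ≤ n * Real.log n := by
    rw [← Real.log_pow]
    apply Real.log_le_log (by exact_mod_cast Nat.factorial_pos n)
    exact_mod_cast Nat.factorial_le_pow n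
  have h3 : ∀ p ∈ (Finset.range (n+1)).filter Nat.Prime,
      n * (Real.log p / ((p:ℝ) - 1)) ≤ 4 * ((padicValNat p n.factorial : ℝ) * Real.log p) := by
    intro p hp
    simp only [Finset.mem_filter, Finset.mem_range] at hp
    obtain ⟨hpn, hp⟩ := hp
    have := Fact.mk hp
    have hp2 : (2:ℝ) ≤ p := by exact_mod_cast hp.two_le
    have hlog : 0 ≤ Real.log p := Real.log_nonneg (by linarith)
    have hk : 1 ≤ n / p := Nat.div_pos (by omega) hp.pos
    have hv : n / p ≤ padicValNat p n.factorial := by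
      rw [← padicValNat_mul_div_factorial n, padicValNat_factorial_mul]; omega
    have hlt : n < p * (n/p) + p := by
      have := Nat.div_add_mod n p; have := Nat.mod_lt n hp.pos; omega
    have hlt' : (n:ℝ) ≤ 2 * p * padicValNat p n.factorial := by
      have a1 : n ≤ 2 * p * padicValNat p n.factorial := by nlinarith
      exact_mod_cast a1
    rw [mul_div_assoc', div_le_iff₀ (by linarith)]
    have hv0 : (0:ℝ) ≤ padicValNat p n.factorial := by positivity
    have : (n:ℝ) ≤ 4 * padicValNat p n.factorial * (p - 1) := by nlinarith
    nlinarith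
  have h4 := Finset.sum_le_sum h3
  rw [← Finset.mul_sum, ← Finset.mul_sum, ← h1] at h4
  nlinarith

lemma per_prime (A B : ℤ) (P Q : ℤ[X]) (hcop : IsRelPrime P Q) (d : ℕ)
    (hP : P.natDegree ≤ d) (hQd : Q.natDegree ≤ d) (S : Finset ℤ) (hS : ↑S ⊆ Set.Icc A B)
    (hne : S.Nonempty) (R : ℕ) (hR : R ≠ 0)
    (hdvd : ∀ x : ℤ, Int.gcd (P.eval x) (Q.eval x) ∣ R) (p : ℕ) (hp : p.Prime) :
    ∑ x ∈ S, (padicValNat p (Int.gcd (P.eval x) (Q.eval x)) : ℝ) ≤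
      d * padicValNat p R + d * ((B:ℝ) - A) / ((p:ℝ) - 1) := by
  classical
  have := Fact.mk hp
  have hp1 : (0:ℝ) < (p:ℝ) - 1 := by
    have : (2:ℝ) ≤ p := by exact_mod_cast hp.two_le
    linarith
  obtain ⟨F, hFd, hFp, hFg⟩ : ∃ F : ℤ[X], F.natDegree ≤ d ∧ ¬ (C (p:ℤ) ∣ F) ∧
      ∀ x : ℤ, ((Int.gcd (P.eval x) (Q.eval x) : ℕ) : ℤ) ∣ F.eval x := by
    by_cases h : C (p:ℤ) ∣ P
    · refine ⟨Q, hQd, fun h' => ?_, fun x => Int.gcd_dvd_right _ _⟩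
      have h3 := isUnit_C.mp (hcop h h')
      rw [Int.isUnit_iff] at h3
      have := hp.two_le
      omega
    · exact ⟨P, hP, h, fun x => Int.gcd_dvd_left _ _⟩
  obtain ⟨a, haS, ha⟩ := newton_vals p S hne d F hFd hFp
  set v : ℤ → ℕ := fun x => padicValNat p (Int.gcd (P.eval x) (Q.eval x)) with hv
  set E : Finset ℤ := Finset.univ.image a with hE
  have hEc : E.card ≤ d := by
    simpa using Finset.card_image_le (s := (Finset.univ : Finset (Fin d))) (f := a)
  have hES : E ⊆ S := by
    intro x hx
    obtain ⟨i, _, rfl⟩ := Finset.mem_image.mp hx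
    exact haS i
  have hvR : ∀ x, v x ≤ padicValNat p R := by
    intro x
    exact (padicValNat_dvd_iff_le hR).mp (pow_padicValNat_dvd.trans (hdvd x))
  have h1 : ∑ x ∈ E, (v x : ℝ) ≤ d * padicValNat p R := by
    calc ∑ x ∈ E, (v x : ℝ) ≤ ∑ x ∈ E, (padicValNat p R : ℝ) :=
          Finset.sum_le_sum (fun x _ => by exact_mod_cast hvR x)
      _ = E.card * padicValNat p R := by rw [Finset.sum_const, nsmul_eq_mul]
      _ ≤ _ := by gcongr
  have h2 : ∑ x ∈ S \ E, (v x : ℝ) ≤ d * ((B:ℝ) - A) / ((p:ℝ) - 1) := by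
    have hx : ∀ x ∈ S \ E, (v x : ℝ) ≤ ∑ i, (padicValInt p (x - a i) : ℝ) := by
      intro x hx
      obtain ⟨hxS, hxE⟩ := Finset.mem_sdiff.mp hx
      have := ha x hxS (fun i h => hxE (Finset.mem_image.mpr ⟨i, Finset.mem_univ _, h.symm⟩)) (v x) (by
        have : p ^ v x ∣ Int.gcd (P.eval x) (Q.eval x) := pow_padicValNat_dvd
        exact dvd_trans (by exact_mod_cast this) (hFg x))
      exact_mod_cast this
    refine (Finset.sum_le_sum hx).trans ?_
    rw [Finset.sum_comm]
    have hi : ∀ i ∈ (Finset.univ : Finset (Fin d)), ∑ x ∈ S \ E, (padicValInt p (x - a i) : ℝ) ≤ ((B:ℝ) - A) / ((p:ℝ) - 1) := by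
      intro i _
      have hai := hS (haS i)
      have := sum_val_le p A B (a i) hai.1 hai.2
      rw [le_div_iff₀ hp1, mul_comm]
      refine le_trans ?_ this
      apply mul_le_mul_of_nonneg_left _ hp1.le
      apply Finset.sum_le_sum_of_subset_of_nonneg
      · intro x hx
        obtain ⟨hxS, hxE⟩ := Finset.mem_sdiff.mp hx
        refine Finset.mem_erase.mpr ⟨fun h => hxE (Finset.mem_image.mpr ⟨i, Finset.mem_univ _, h.symm⟩), ?_⟩
        exact Finset.mem_Icc.mpr (hS hxS)
      · intros; positivity
    refine (Finset.sum_le_sum hi).trans ?_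
    rw [Finset.sum_const, nsmul_eq_mul, Finset.card_univ, Fintype.card_fin, mul_div_assoc]
  have h3 := Finset.sum_sdiff (f := fun x => (v x : ℝ)) hES
  rw [← h3]
  linarith

lemma prime_sum (R : ℕ) (hR : R ≠ 0) (n : ℕ) (hn1 : 1 ≤ n) (hn : Real.log R ≤ n) :
    ∑ p ∈ R.primeFactors, Real.log p / ((p:ℝ) - 1) ≤ 4 * Real.log n + 1 := by
  have hnR : (0:ℝ) < n := by exact_mod_cast hn1
  rw [← Finset.sum_filter_add_sum_filter_not R.primeFactors (fun p => p ≤ n)]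
  have hpos : ∀ p : ℕ, p.Prime → 0 ≤ Real.log p / ((p:ℝ) - 1) := by
    intro p hp
    have : (2:ℝ) ≤ p := by exact_mod_cast hp.two_le
    exact div_nonneg (Real.log_nonneg (by linarith)) (by linarith)
  have h1 : ∑ p ∈ R.primeFactors with p ≤ n, Real.log p / ((p:ℝ) - 1) ≤ 4 * Real.log n := by
    refine le_trans ?_ (mertens n hn1)
    apply Finset.sum_le_sum_of_subset_of_nonneg
    · intro p hp
      simp only [Finset.mem_filter, Finset.mem_range] at hp ⊢
      exact ⟨by omega, Nat.prime_of_mem_primeFactors hp.1⟩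
    · intro p hp _
      exact hpos p (Finset.mem_filter.mp hp).2
  have h2 : ∑ p ∈ R.primeFactors with ¬ p ≤ n, Real.log p / ((p:ℝ) - 1) ≤ 1 := by
    have e : ∑ p ∈ R.primeFactors with ¬ p ≤ n, Real.log p / ((p:ℝ) - 1) ≤
        ∑ p ∈ R.primeFactors with ¬ p ≤ n, (padicValNat p R : ℝ) * Real.log p / n := by
      apply Finset.sum_le_sum
      intro p hp
      obtain ⟨hpR, hpn⟩ := Finset.mem_filter.mp hp
      have hpp := Nat.prime_of_mem_primeFactors hpR
      have := Fact.mk hpp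
      have hv : 1 ≤ padicValNat p R := one_le_padicValNat_of_dvd hR (Nat.dvd_of_mem_primeFactors hpR)
      have hv' : (1:ℝ) ≤ padicValNat p R := by exact_mod_cast hv
      have hp2 : (2:ℝ) ≤ p := by exact_mod_cast hpp.two_le
      have hlog : 0 ≤ Real.log p := Real.log_nonneg (by linarith)
      have hpn' : (n:ℝ) ≤ p - 1 := by
        have : n + 1 ≤ p := by omega
        have : (n:ℝ) + 1 ≤ p := by exact_mod_cast this
        linarith
      calc Real.log p / ((p:ℝ) - 1) ≤ Real.log p / n := by gcongr
        _ ≤ _ := by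
          gcongr
          nlinarith
    refine e.trans ?_
    have e2 : ∑ p ∈ R.primeFactors with ¬ p ≤ n, (padicValNat p R : ℝ) * Real.log p / n ≤
        ∑ p ∈ R.primeFactors, (padicValNat p R : ℝ) * Real.log p / n := by
      apply Finset.sum_le_sum_of_subset_of_nonneg (Finset.filter_subset _ _)
      intro p _ _
      have : 0 ≤ Real.log p := Real.log_natCast_nonneg p
      positivity
    refine e2.trans ?_
    rw [← Finset.sum_div, ← log_eq_sum R R hR dvd_rfl, div_le_one hnR]
    exact hn
  linarith

lemma analytic (d η H t L D l n : ℝ) (hd : 1 ≤ d) (hη : 1 ≤ η) (hH : 4 ≤ H) (ht0 : 0 ≤ t)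
    (hl : l ≤ H) (hD : η * d ^ 3 * H ≤ D) (hL0 : 0 ≤ L)
    (hL : L ≤ 2 * d * (H + t + d * l + Real.log (d + 1)) + 2 * d * Real.log (2 * d))
    (hn1 : 1 ≤ n) (hn : n ≤ L + 1)
    (ht : t ≤ 4 / 3 * (η * d * L / D + η * d * (4 * Real.log n + 1))) :
    t ≤ 960 * η * d * Real.log (η * d * H) := by
  have hd0 : 0 < d := by linarith
  have hη0 : 0 < η := by linarith
  have hH0 : 0 < H := by linarith
  have hlog1 : Real.log (d + 1) ≤ d := by
    have := Real.log_le_sub_one_of_pos (show 0 < d + 1 by linarith); linarith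
  have hlog2 : Real.log (2 * d) ≤ 2 * d - 1 := 
    Real.log_le_sub_one_of_pos (show 0 < 2 * d by linarith)
  have hL1 : L ≤ 2 * d * (H + t + d * H + 3 * d) := by
    have : d * l ≤ d * H := mul_le_mul_of_nonneg_left hl hd0.le
    nlinarith
  have hL2 : L ≤ 4 * d ^ 2 * H + 2 * d * t + 6 * d ^ 2 := by nlinarith [mul_nonneg (mul_nonneg hd0.le hH0.le) (sub_nonneg.mpr hd)]
  have hDpos : 0 < η * d ^ 3 * H := by positivity
  have h1 : η * d * L / D ≤ L / (d ^ 2 * H) := by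
    rw [div_le_div_iff₀ (by linarith) (by positivity)]
    calc η * d * L * (d ^ 2 * H) = L * (η * d ^ 3 * H) := by ring
      _ ≤ L * D := by gcongr
  have h2 : L / (d ^ 2 * H) ≤ 6 + t / 2 := by
    rw [div_le_iff₀ (by positivity)]
    have : d * t * 4 ≤ d ^ 2 * H * t := by
      have : d * 4 ≤ d ^ 2 * H := by nlinarith
      nlinarith
    have : d ^ 2 * 4 ≤ d ^ 2 * H := by gcongr
    nlinarith
  set w := η * d with hw
  have hw1 : 1 ≤ w := by nlinarith
  have hdw : d ≤ w := by nlinarith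
  set X := w * H with hX
  have hX4 : 4 ≤ X := by nlinarith
  have hX0 : 0 < X := by linarith
  have h3 : n ≤ 3/2 * X ^ 2 + 2 * w * t := by
    have a1 : d ^ 2 ≤ w ^ 2 := by gcongr
    have a2 : d * t ≤ w * t := by gcongr
    have a3 : n ≤ w ^ 2 * (4 * H + 7) + 2 * w * t := by nlinarith
    have a4 : w ^ 2 * (4 * H + 7) ≤ 3/2 * X ^ 2 := by
      rw [hX, mul_pow]
      have : 4 * H + 7 ≤ 3/2 * H ^ 2 := by nlinarith
      nlinarith [sq_nonneg w]
    linarith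
  have h4 : Real.log n ≤ 1 + 2 * Real.log X + w * t / (2 * X ^ 2) := by
    have hn0 : 0 < n := by linarith
    have a1 := Real.log_le_sub_one_of_pos (show 0 < n / (4 * X ^ 2) by positivity)
    rw [Real.log_div hn0.ne' (by positivity), Real.log_mul (by norm_num) (by positivity),
      Real.log_pow] at a1
    have a2 : n / (4 * X ^ 2) ≤ 3/8 + w * t / (2 * X ^ 2) := by
      rw [div_le_iff₀ (by positivity)]
      have : (3/8 + w * t / (2 * X ^ 2)) * (4 * X ^ 2) = 3/2 * X^2 + 2 * w * t := by
        field_simp; ring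
      linarith
    have a3 : Real.log 4 ≤ 1.5 := by
      rw [show (4:ℝ) = 2 ^ 2 by norm_num, Real.log_pow]
      have := Real.log_two_lt_d9
      push_cast; linarith
    push_cast at a1
    linarith
  have h5 : w * (w * t / (2 * X ^ 2)) ≤ t / 32 := by
    rw [mul_div_assoc', div_le_iff₀ (by positivity)]
    have h4w : w * 4 ≤ X := mul_le_mul_of_nonneg_left hH (by linarith)
    have h4w2 : (w * 4) ^ 2 ≤ X ^ 2 := pow_le_pow_left₀ (by linarith) h4w 2
    have := mul_le_mul_of_nonneg_left h4w2 ht0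
    linarith
  have h6 : w * Real.log n ≤ w * (1 + 2 * Real.log X) + t / 32 := by
    have := mul_le_mul_of_nonneg_left h4 (by linarith : 0 ≤ w)
    linarith
  have hlX : 1 ≤ Real.log X := by
    have : Real.log 4 ≤ Real.log X := Real.log_le_log (by norm_num) hX4
    rw [show (4:ℝ) = 2 ^ 2 by norm_num, Real.log_pow] at this
    have := Real.log_two_gt_d9
    push_cast at *; linarith
  have h7 : w ≤ w * Real.log X := by nlinarith
  have e : 960 * η * d * Real.log X = 960 * (w * Real.log X) := by rw [hw]; ring
  rw [e]
  linarith

lemma val_bound (a b : ℤ) (hb : b ≠ 0) (H : ℝ) (h : ratHeight ((a:ℚ) / (b:ℚ)) ≤ H) :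
    |(a:ℝ)| ≤ Int.gcd a b * Real.exp H ∧ |(b:ℝ)| ≤ Int.gcd a b * Real.exp H := by
  set q : ℚ := (a:ℚ) / (b:ℚ) with hq
  unfold ratHeight at h
  have hden : (0:ℝ) < q.den := by exact_mod_cast q.den_pos
  have hmax : max |(q.num : ℝ)| (q.den : ℝ) ≤ Real.exp H :=
    (Real.log_le_iff_le_exp (lt_of_lt_of_le hden (le_max_right _ _))).mp h
  obtain ⟨h1, h2⟩ := max_le_iff.mp hmax
  have hg : (Int.gcd a b) ≠ 0 := by
    intro h0; rw [Int.gcd_eq_zero_iff] at h0; exact hb h0.2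
  obtain ⟨c, hc1, hc2⟩ := Rat.num_den_mk (q := q) (n := a) (d := b) hb (by rw [hq, Rat.divInt_eq_div])
  have hcg : |c| = Int.gcd a b := by
    rw [hc1, hc2, Int.gcd_mul_left]
    have : Int.gcd q.num (q.den : ℤ) = 1 := by
      have := q.reduced
      rwa [Nat.Coprime, ← Int.natAbs_natCast q.den] at this
    rw [this]; simp
  have hcg' : |(c:ℝ)| = Int.gcd a b := by exact_mod_cast hcg
  rw [← hcg']
  have ea : (a:ℝ) = c * q.num := by exact_mod_cast hc1
  have eb : (b:ℝ) = c * q.den := by exact_mod_cast hc2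
  rw [ea, eb, abs_mul, abs_mul, abs_of_pos hden]
  constructor <;> gcongr

lemma coeff_le_sup (P : ℤ[X]) (i : ℕ) : |(P.coeff i : ℝ)| ≤ ⨆ i, |(P.coeff i : ℝ)| := by
  apply le_ciSup (f := fun i => |(P.coeff i : ℝ)|)
  refine ⟨∑ j ∈ P.support, |(P.coeff j : ℝ)|, ?_⟩
  rintro _ ⟨k, rfl⟩
  by_cases hk : k ∈ P.support
  · exact Finset.single_le_sum (f := fun j => |(P.coeff j : ℝ)|) (fun _ _ => abs_nonneg _) hk
  · simp only [notMem_support_iff.mp hk]; simp; positivity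

/-- Let `A ≤ B` be integers, `D = B − A`, `M = max{|A|, |B|}`. Let
`F = P/Q ∈ ℚ(X)` (with `P, Q ∈ ℤ[X]` coprime, i.e. in lowest terms) have degree at most
`d ≥ 1`, let `S` be a set of integers in `[A, B]` containing no poles of `F`, let `η ≥ 1`,
and `H ≥ max{4, log(2M)}`. Assume (1) `h(F(x)) ≤ H` for every `x ∈ S`; (2) `S` contains at
least `D/η` elements; (3) `D ≥ max{η·d³·H, 4·η·d}`. Then
`h(F) ≤ H + 960·η·d·log(η·d·H) + d·log(2M) + log(d+1)`. -/
theorem stmt_18 (A B : ℤ) (hAB : A ≤ B) (D M : ℤ) (hD : D = B - A) (hM : M = max |A| |B|)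
    (P Q : Polynomial ℤ) (hcop : IsRelPrime P Q) (hQ : Q ≠ 0)
    (d : ℕ) (hd : 1 ≤ d) (hdeg : max P.natDegree Q.natDegree ≤ d)
    (S : Finset ℤ) (hS : ↑S ⊆ Set.Icc A B) (hpoles : ∀ x ∈ S, Q.eval x ≠ 0)
    (η : ℝ) (hη : 1 ≤ η) (H : ℝ) (hH : max 4 (Real.log (2 * (M : ℝ))) ≤ H)
    (hval : ∀ x ∈ S, ratHeight (((P.eval x : ℤ) : ℚ) / ((Q.eval x : ℤ) : ℚ)) ≤ H)
    (hcard : (D : ℝ) / η ≤ (S.card : ℝ))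
    (hbig : max (η * (d : ℝ) ^ 3 * H) (4 * η * (d : ℝ)) ≤ (D : ℝ)) :
    fracHeight P Q ≤ H + 960 * η * (d : ℝ) * Real.log (η * (d : ℝ) * H)
      + (d : ℝ) * Real.log (2 * (M : ℝ)) + Real.log ((d : ℝ) + 1) := by
  classical
  have hP : P.natDegree ≤ d := (le_max_left _ _).trans hdeg
  have hQd : Q.natDegree ≤ d := (le_max_right _ _).trans hdeg
  have hdR : (1:ℝ) ≤ d := by exact_mod_cast hd
  have hH4 : 4 ≤ H := (le_max_left _ _).trans hH
  have hHl : Real.log (2 * (M:ℝ)) ≤ H := (le_max_right _ _).trans hH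
  have hD1 : η * (d:ℝ) ^ 3 * H ≤ D := (le_max_left _ _).trans hbig
  have hD2 : 4 * η * (d:ℝ) ≤ D := (le_max_right _ _).trans hbig
  have hη0 : 0 < η := by linarith
  have hDpos : (0:ℝ) < D := lt_of_lt_of_le (by positivity) hD2
  have hScard : 4 * (d:ℝ) ≤ S.card := by
    refine le_trans ?_ hcard
    rw [le_div_iff₀ hη0]; linarith
  have hScard0 : (0:ℝ) < S.card := by linarith
  have hSne : S.Nonempty := by
    rw [← Finset.card_pos]; exact_mod_cast hScard0
  have hMx : ∀ x ∈ S, |(x:ℝ)| ≤ M := by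
    intro x hx
    have hxI := hS hx
    have h1 : |x| ≤ M := by
      rw [hM]; exact abs_le_max_abs_abs hxI.1 hxI.2
    exact_mod_cast h1
  have hM1 : (1:ℝ) ≤ M := by
    have h0 : 0 < D := by exact_mod_cast hDpos
    have h1 : 1 ≤ M := by
      have a1 : |A| ≤ M := by rw [hM]; exact le_max_left _ _
      have a2 : |B| ≤ M := by rw [hM]; exact le_max_right _ _
      have := abs_le.mp a1
      have := abs_le.mp a2
      omega
    exact_mod_cast h1
  -- the height
  set c : ℝ := max (⨆ i, |(P.coeff i : ℝ)|) (⨆ i, |(Q.coeff i : ℝ)|) with hc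
  have hPc : ∀ i, |(P.coeff i : ℝ)| ≤ c := fun i => (coeff_le_sup P i).trans (le_max_left _ _)
  have hQc : ∀ i, |(Q.coeff i : ℝ)| ≤ c := fun i => (coeff_le_sup Q i).trans (le_max_right _ _)
  have hc1 : 1 ≤ c := by
    refine le_trans ?_ (hQc Q.natDegree)
    exact_mod_cast Int.one_le_abs (leadingCoeff_ne_zero.mpr hQ)
  have hc0 : 0 < c := by linarith
  have hfr : fracHeight P Q = Real.log c := rfl
  rw [hfr]
  obtain ⟨R, hR0, hRb, hRd⟩ := exists_res P Q hcop hQ d hd hP hQd c hc1 hPc hQc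
  have hRpos : (0:ℝ) < R := by exact_mod_cast Nat.pos_of_ne_zero hR0
  set g : ℤ → ℕ := fun x => Int.gcd (P.eval x) (Q.eval x) with hg
  set L := Real.log R with hL
  have hL0 : 0 ≤ L := Real.log_natCast_nonneg R
  set n := ⌊L⌋₊ + 1 with hn
  have hn1 : 1 ≤ n := by omega
  have hnL : L ≤ n := by rw [hn]; push_cast; exact (Nat.lt_floor_add_one L).le
  have hnL' : (n:ℝ) ≤ L + 1 := by
    rw [hn]; push_cast
    have := Nat.floor_le hL0
    linarith
  set V := ∑ x ∈ S, Real.log (g x) with hV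
  have hVb : V ≤ d * L + d * D * (4 * Real.log n + 1) := by
    have e1 : V = ∑ p ∈ R.primeFactors, (∑ x ∈ S, (padicValNat p (g x) : ℝ)) * Real.log p := by
      rw [hV]
      simp_rw [Finset.sum_mul]
      rw [Finset.sum_comm]
      exact Finset.sum_congr rfl (fun x _ => log_eq_sum (g x) R hR0 (hRd x))
    have e2 : V ≤ ∑ p ∈ R.primeFactors,
        (d * ((padicValNat p R : ℝ) * Real.log p) + d * D * (Real.log p / ((p:ℝ) - 1))) := by
      rw [e1]
      apply Finset.sum_le_sum
      intro p hp
      have h1 := per_prime A B P Q hcop d hP hQd S hS hSne R hR0 hRd p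
        (Nat.prime_of_mem_primeFactors hp)
      have h2 := mul_le_mul_of_nonneg_right h1 (Real.log_natCast_nonneg p)
      refine h2.trans (le_of_eq ?_)
      rw [hD]; push_cast; ring
    rw [Finset.sum_add_distrib, ← Finset.mul_sum, ← Finset.mul_sum, ← log_eq_sum R R hR0 dvd_rfl] at e2
    refine e2.trans ?_
    have := prime_sum R hR0 n hn1 hnL
    gcongr
  have hlog0 : ∀ x, 0 ≤ Real.log (g x) := fun x => Real.log_natCast_nonneg _
  have hV0 : 0 ≤ V := Finset.sum_nonneg (fun x _ => hlog0 x)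
  set t := 4 / 3 * (V / S.card) with ht
  have ht0 : 0 ≤ t := by positivity
  have htV : 3 / 4 * (S.card : ℝ) * t = V := by rw [ht]; field_simp
  obtain ⟨T, hTS, hTc⟩ : ∃ T ⊆ S.filter (fun x => Real.log (g x) ≤ t), T.card = d + 1 := by
    apply Finset.exists_subset_card_eq
    by_contra hlt
    have hle : (S.filter (fun x => Real.log (g x) ≤ t)).card ≤ d := by omega
    have hle' : ((S.filter (fun x => Real.log (g x) ≤ t)).card : ℝ) ≤ d := by exact_mod_cast hle
    have hadd := Finset.card_filter_add_card_filter_not (s := S) (fun x => Real.log (g x) ≤ t)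
    have hadd' : ((S.filter (fun x => Real.log (g x) ≤ t)).card : ℝ) +
      (S.filter (fun x => ¬ Real.log (g x) ≤ t)).card = S.card := by exact_mod_cast hadd
    set U := S.filter (fun x => ¬ Real.log (g x) ≤ t) with hU
    have hUc : 3 / 4 * (S.card : ℝ) ≤ U.card := by linarith
    have hUne : U.Nonempty := by
      rw [← Finset.card_pos]
      have : (0:ℝ) < U.card := by linarith
      exact_mod_cast this
    have h1 : ∑ x ∈ U, t < ∑ x ∈ U, Real.log (g x) := by
      apply Finset.sum_lt_sum_of_nonempty hUne
      intro x hx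
      exact not_le.mp (Finset.mem_filter.mp hx).2
    have h2 : ∑ x ∈ U, Real.log (g x) ≤ V :=
      Finset.sum_le_sum_of_subset_of_nonneg (Finset.filter_subset _ _) (fun x _ _ => hlog0 x)
    rw [Finset.sum_const, nsmul_eq_mul] at h1
    have := mul_le_mul_of_nonneg_right hUc ht0
    linarith
  -- the interpolation bound
  have hTS' : ∀ x ∈ T, x ∈ S ∧ (g x : ℝ) ≤ Real.exp t := by
    intro x hx
    obtain ⟨h1, h2⟩ := Finset.mem_filter.mp (hTS hx)
    refine ⟨h1, ?_⟩
    have hgpos : (0:ℝ) < g x := by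
      have : g x ≠ 0 := ne_zero_of_dvd_ne_zero hR0 (hRd x)
      exact_mod_cast Nat.pos_of_ne_zero this
    exact (Real.log_le_iff_le_exp hgpos).mp h2
  have hvb : ∀ x ∈ T, |((P.eval x : ℤ):ℝ)| ≤ Real.exp t * Real.exp H ∧
      |((Q.eval x : ℤ):ℝ)| ≤ Real.exp t * Real.exp H := by
    intro x hx
    obtain ⟨h1, h2⟩ := hTS' x hx
    obtain ⟨h3, h4⟩ := val_bound _ _ (hpoles x h1) H (hval x h1)
    exact ⟨h3.trans (by gcongr), h4.trans (by gcongr)⟩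
  have hcb : c ≤ (d + 1) * (Real.exp t * Real.exp H * (2 * M) ^ d) := by
    have hmono : ((d:ℝ) + 1) * (Real.exp t * Real.exp H * (1 + M) ^ d) ≤
        (d + 1) * (Real.exp t * Real.exp H * (2 * M) ^ d) := by
      gcongr; linarith
    refine le_trans ?_ hmono
    apply max_le
    · exact ciSup_le (fun k => coeff_bound P d hP T hTc M _ (by linarith)
        (fun x hx => hMx x (hTS' x hx).1) (fun x hx => (hvb x hx).1) k)
    · exact ciSup_le (fun k => coeff_bound Q d hQd T hTc M _ (by linarith)
        (fun x hx => hMx x (hTS' x hx).1) (fun x hx => (hvb x hx).2) k)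
  have hlogc : Real.log c ≤ H + t + d * Real.log (2 * (M:ℝ)) + Real.log ((d:ℝ) + 1) := by
    have h2M : (0:ℝ) < 2 * M := by linarith
    refine (Real.log_le_log hc0 hcb).trans (le_of_eq ?_)
    rw [Real.log_mul (by positivity) (by positivity), Real.log_mul (by positivity) (by positivity),
      Real.log_mul (by positivity) (by positivity), Real.log_exp, Real.log_exp, Real.log_pow]
    ring
  have hLb : L ≤ 2 * d * (H + t + d * Real.log (2 * (M:ℝ)) + Real.log ((d:ℝ) + 1))
      + 2 * d * Real.log (2 * (d:ℝ)) := by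
    have h1 : L ≤ 2 * d * (Real.log (2 * d) + Real.log c) := by
      refine (Real.log_le_log hRpos hRb).trans (le_of_eq ?_)
      rw [Real.log_pow, Real.log_mul (by positivity) (by positivity)]
      push_cast; ring
    have := mul_le_mul_of_nonneg_left hlogc (by positivity : (0:ℝ) ≤ 2 * d)
    linarith
  have htb : t ≤ 4 / 3 * (η * d * L / D + η * d * (4 * Real.log n + 1)) := by
    rw [ht]
    apply mul_le_mul_of_nonneg_left _ (by norm_num)
    have h1 : V / S.card ≤ V / (D / η) := by gcongr
    have h2 : V / (D / η) ≤ (d * L + d * D * (4 * Real.log n + 1)) / (D / η) := by gcongr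
    refine h1.trans (h2.trans (le_of_eq ?_))
    field_simp
  have := analytic d η H t L D (Real.log (2 * (M:ℝ))) n hdR hη hH4 ht0 hHl hD1 hL0 hLb
    (by exact_mod_cast hn1) hnL' htb
  linarith
end

section
/- Let c ≥ 1 be a real number, and let F ∈ ℚ(X) be a rational fraction of degree at most d ≥ 1. Let V ⊂ ℤ be a finite set such that F has no poles in ℤ \ V. Assume that for every integer x ∉ V one has h(F(x)) ≤ c·max{1, d·log(d) + d·h(x)}. Then h(F) ≤ C·d·log(4d), where C = (4c+1923)·(12 + log max{1, #V} + 2·log(c)). -/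
open Polynomial

lemma det_dvd_aux {N : ℕ} (M : Matrix (Fin N) (Fin N) ℤ) (g : Fin N → ℤ)
    (h : ∀ i j, g i ∣ M i j) : ∏ i, g i ∣ M.det := by
  choose M' hM' using h
  have : M = Matrix.diagonal g * Matrix.of M' := by
    ext i j
    simp [Matrix.diagonal_mul, hM']
  rw [this, Matrix.det_mul, Matrix.det_diagonal]
  exact dvd_mul_right _ _

/-- The polynomials spanning the relevant sublattice of `(P, Q)`. -/
noncomputable def latW (P Q G : ℤ[X]) (n : ℕ) :
    Fin (n + (P.natDegree + Q.natDegree)) → ℤ[X] :=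
  Fin.addCases (fun j => X ^ (j : ℕ) * G)
    (fun j => X ^ n * Fin.addCases (motive := fun _ => ℤ[X]) (fun j₁ => X ^ (j₁ : ℕ) * Q)
      (fun j₁ => X ^ (j₁ : ℕ) * P) j)

lemma latW_deg (P Q : ℤ[X]) (u w : ℤ) (n : ℕ) (j) :
    (latW P Q (C u * P + C w * Q) n j).natDegree < n + (P.natDegree + Q.natDegree) := by
  have hG : (C u * P + C w * Q).natDegree ≤ P.natDegree + Q.natDegree := by
    refine (natDegree_add_le _ _).trans (max_le ?_ ?_)
    · exact (natDegree_C_mul_le _ _).trans (by omega)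
    · exact (natDegree_C_mul_le _ _).trans (by omega)
  induction j using Fin.addCases with
  | left j =>
    simp only [latW, Fin.addCases_left]
    refine (natDegree_mul_le).trans_lt ?_
    rw [natDegree_X_pow]
    have := j.2
    omega
  | right j =>
    simp only [latW, Fin.addCases_right]
    refine (natDegree_mul_le).trans_lt ?_
    rw [natDegree_X_pow]
    induction j using Fin.addCases with
    | left j =>
      simp only [Fin.addCases_left]
      have := natDegree_mul_le (p := X ^ (j : ℕ)) (q := Q)
      rw [natDegree_X_pow] at this
      have := j.2
      omega
    | right j =>
      simp only [Fin.addCases_right]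
      have := natDegree_mul_le (p := X ^ (j : ℕ)) (q := P)
      rw [natDegree_X_pow] at this
      have := j.2
      omega

lemma latW_dvd (P Q : ℤ[X]) (u w : ℤ) (n : ℕ) (x g : ℤ) (hP : g ∣ P.eval x) (hQ : g ∣ Q.eval x)
    (j) : g ∣ (latW P Q (C u * P + C w * Q) n j).eval x := by
  induction j using Fin.addCases with
  | left j =>
    simp only [latW, Fin.addCases_left, eval_mul, eval_add, eval_C]
    exact Dvd.dvd.mul_left (dvd_add (hP.mul_left _) (hQ.mul_left _)) _
  | right j =>
    simp only [latW, Fin.addCases_right, eval_mul]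
    apply Dvd.dvd.mul_left
    induction j using Fin.addCases with
    | left j => simpa only [Fin.addCases_left, eval_mul] using hQ.mul_left _
    | right j => simpa only [Fin.addCases_right, eval_mul] using hP.mul_left _

lemma latW_det (P Q G : ℤ[X]) (n : ℕ) :
    (Matrix.of fun (i j : Fin (n + (P.natDegree + Q.natDegree))) => (latW P Q G n j).coeff (i : ℕ)).det
      = (G.coeff 0) ^ n * resultant P Q := by
  rw [← Matrix.det_submatrix_equiv_self finSumFinEquiv]
  have : (Matrix.of fun (i j : Fin (n + (P.natDegree + Q.natDegree))) => (latW P Q G n j).coeff (i : ℕ)).submatrix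
      finSumFinEquiv finSumFinEquiv =
      Matrix.fromBlocks (Matrix.of fun i j : Fin n => (X ^ (j : ℕ) * G).coeff (i : ℕ)) 0
        (Matrix.of fun (i : Fin (P.natDegree + Q.natDegree)) (j : Fin n) =>
          (X ^ (j : ℕ) * G).coeff (n + i : ℕ))
        (sylvester P Q P.natDegree Q.natDegree) := by
    ext i j
    rcases i with i | i <;> rcases j with j | j
    · simp [latW]
    · simp only [latW, Matrix.submatrix_apply, finSumFinEquiv_apply_left, finSumFinEquiv_apply_right,
        Matrix.of_apply, Fin.addCases_right, Matrix.fromBlocks_apply₁₂, Fin.val_castAdd, Matrix.zero_apply]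
      rw [coeff_X_pow_mul', if_neg (by have := i.2; omega)]
    · simp [latW]
    · simp only [latW, Matrix.submatrix_apply, finSumFinEquiv_apply_right,
        Matrix.of_apply, Fin.addCases_right, Matrix.fromBlocks_apply₂₂, Fin.val_natAdd]
      rw [coeff_X_pow_mul', if_pos (by omega), Nat.add_sub_cancel_left, sylvester, Matrix.of_apply]
      induction j using Fin.addCases with
      | left j =>
        simp only [Fin.addCases_left, coeff_X_pow_mul', Set.mem_Icc]
        split_ifs with h1 h2 h2
        · rfl
        · exact coeff_eq_zero_of_natDegree_lt (by omega)
        · omega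
        · rfl
      | right j =>
        simp only [Fin.addCases_right, coeff_X_pow_mul', Set.mem_Icc]
        split_ifs with h1 h2 h2
        · rfl
        · exact coeff_eq_zero_of_natDegree_lt (by omega)
        · omega
        · rfl
  rw [this, Matrix.det_fromBlocks_zero₁₂, resultant, Matrix.det_of_isLowerTriangular]
  · congr 1
    simp [coeff_X_pow_mul']
  · intro i j hij
    have hij' : i < j := hij
    rw [Matrix.of_apply, coeff_X_pow_mul', if_neg (by have : (i : ℕ) < j := hij'; omega)]

lemma key0 (P Q : ℤ[X]) (n : ℕ) (v : Fin (n + (P.natDegree + Q.natDegree)) → ℤ) :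
    ∏ i, (Int.gcd (P.eval (v i)) (Q.eval (v i)) : ℤ) ∣
      (Int.gcd (P.eval 0) (Q.eval 0) : ℤ) ^ n * resultant P Q * (Matrix.vandermonde v).det := by
  set u := Int.gcdA (P.eval 0) (Q.eval 0) with hu
  set w := Int.gcdB (P.eval 0) (Q.eval 0) with hw
  have hG : (C u * P + C w * Q).coeff 0 = (Int.gcd (P.eval 0) (Q.eval 0) : ℤ) := by
    rw [Int.gcd_eq_gcd_ab, coeff_zero_eq_eval_zero]
    simp only [eval_add, eval_mul, eval_C]
    ring
  rw [← hG, ← latW_det, mul_comm, ← Matrix.det_mul]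
  apply det_dvd_aux
  intro i j
  have : (Matrix.vandermonde v * Matrix.of fun (i j : Fin (n + (P.natDegree + Q.natDegree))) =>
      (latW P Q (C u * P + C w * Q) n j).coeff (i : ℕ)) i j =
      (latW P Q (C u * P + C w * Q) n j).eval (v i) := by
    rw [Matrix.mul_apply, eval_eq_sum_range' (latW_deg P Q u w n j), ← Fin.sum_univ_eq_sum_range
      (fun k => (latW P Q (C u * P + C w * Q) n j).coeff k * v i ^ k)]
    simp [mul_comm]
  rw [this]
  exact latW_dvd _ _ _ _ _ _ _ (Int.gcd_dvd_left ..) (Int.gcd_dvd_right ..) _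

lemma key1 (P Q : ℤ[X]) (n : ℕ) (a : ℤ) (v : Fin (n + (P.natDegree + Q.natDegree)) → ℤ) :
    ∏ i, (Int.gcd (P.eval (v i)) (Q.eval (v i)) : ℤ) ∣
      (Int.gcd (P.eval a) (Q.eval a) : ℤ) ^ n * resultant P Q * (Matrix.vandermonde v).det := by
  have e : n + ((taylor a P).natDegree + (taylor a Q).natDegree)
      = n + (P.natDegree + Q.natDegree) := by simp
  have h := key0 (taylor a P) (taylor a Q) n (fun i => v (Fin.cast e i) - a)
  rw [resultant_taylor] at h
  simp only [taylor_eval, sub_add_cancel, zero_add, Matrix.det_vandermonde_sub] at h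
  have h2 : (Matrix.vandermonde fun i => v (Fin.cast e i)).det = (Matrix.vandermonde v).det := by
    rw [← Matrix.det_submatrix_equiv_self (finCongr e) (Matrix.vandermonde v)]
    congr 1
  rw [h2] at h
  convert h using 1
  exact (Equiv.prod_comp (finCongr e)
    (fun i => (Int.gcd (P.eval (v i)) (Q.eval (v i)) : ℤ))).symm

lemma prod_erase_dvd (e j : ℕ) (hj : j ∈ Finset.range (e + 1)) :
    ∏ k ∈ (Finset.range (e + 1)).erase j, ((j : ℤ) - k) ∣ (e.factorial : ℤ) := by
  rw [Finset.mem_range] at hj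
  have hs : (Finset.range (e + 1)).erase j = Finset.range j ∪ Finset.Ico (j + 1) (e + 1) := by
    ext k; simp only [Finset.mem_erase, Finset.mem_range, Finset.mem_union, Finset.mem_Ico]; omega
  have hdis : Disjoint (Finset.range j) (Finset.Ico (j + 1) (e + 1)) := by
    rw [Finset.disjoint_left]; intro k; simp only [Finset.mem_range, Finset.mem_Ico]; omega
  have h1 : ∏ k ∈ Finset.range j, ((j : ℤ) - k) = (j.factorial : ℤ) := by
    rw [← Finset.prod_range_reflect, ← Finset.prod_range_add_one_eq_factorial]
    push_cast
    refine Finset.prod_congr rfl fun k hk => ?_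
    rw [Finset.mem_range] at hk
    have : ((j - 1 - k : ℕ) : ℤ) = j - 1 - k := by omega
    rw [this]; ring
  have h2 : ∏ k ∈ Finset.Ico (j + 1) (e + 1), ((j : ℤ) - k)
      = (-1) ^ (e - j) * ((e - j).factorial : ℤ) := by
    rw [Finset.prod_Ico_eq_prod_range, ← Finset.prod_range_add_one_eq_factorial]
    have : e + 1 - (j + 1) = e - j := by omega
    rw [this]
    push_cast
    have hneg : (-1 : ℤ) ^ (e - j) = ∏ _k ∈ Finset.range (e - j), (-1 : ℤ) := by simp
    rw [hneg]
    rw [← Finset.prod_mul_distrib]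
    refine Finset.prod_congr rfl fun k hk => ?_
    ring
  rw [hs, Finset.prod_union hdis, h1, h2]
  have h3 : j.factorial * (e - j).factorial ∣ e.factorial :=
    Nat.factorial_mul_factorial_dvd_factorial (by omega)
  have h4 : (j.factorial : ℤ) * ((-1) ^ (e - j) * ((e - j).factorial : ℤ))
      = (-1) ^ (e - j) * ((j.factorial * (e - j).factorial : ℕ) : ℤ) := by
    push_cast; ring
  rw [h4]
  have : IsUnit ((-1 : ℤ) ^ (e - j)) := (isUnit_neg_one).pow _
  rw [this.mul_left_dvd]
  exact_mod_cast h3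

lemma fact_coeff_dvd (P : ℤ[X]) (e : ℕ) (he : P.natDegree ≤ e) (m : ℤ)
    (h : ∀ j ∈ Finset.range (e + 1), m ∣ P.eval (j : ℤ)) (i : ℕ) :
    m ∣ (e.factorial : ℤ) * P.coeff i := by
  have hw : ∀ j : ℕ, ∃ w : ℤ, j ∈ Finset.range (e + 1) →
      (e.factorial : ℤ) = (∏ k ∈ (Finset.range (e + 1)).erase j, ((j : ℤ) - k)) * w := by
    intro j
    by_cases hj : j ∈ Finset.range (e + 1)
    · obtain ⟨w, hw⟩ := prod_erase_dvd e j hj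
      exact ⟨w, fun _ => hw⟩
    · exact ⟨0, fun h => absurd h hj⟩
  choose w hw using hw
  have hid : C (e.factorial : ℤ) * P = ∑ j ∈ Finset.range (e + 1),
      C (P.eval (j : ℤ)) * (C (w j) * ∏ k ∈ (Finset.range (e + 1)).erase j, (X - C (k : ℤ))) := by
    apply Polynomial.eq_of_degrees_lt_of_eval_index_eq (Finset.range (e + 1))
      (v := fun j : ℕ => (j : ℤ)) (fun a _ b _ hab => by simpa using hab)
    · rw [Finset.card_range]
      exact (degree_le_of_natDegree_le ((natDegree_C_mul_le _ _).trans he)).trans_lt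
        (by exact_mod_cast Nat.lt_succ_self e)
    · rw [Finset.card_range]
      refine (degree_sum_le _ _).trans_lt ?_
      rw [Finset.sup_lt_iff (by exact bot_lt_iff_ne_bot.mpr (by simp))]
      intro j hj
      refine (degree_le_of_natDegree_le (n := e) ?_).trans_lt
        (by exact_mod_cast Nat.lt_succ_self e)
      refine (natDegree_C_mul_le _ _).trans ((natDegree_C_mul_le _ _).trans ?_)
      rw [natDegree_prod_of_monic _ _ (fun k _ => monic_X_sub_C _)]
      simp only [natDegree_X_sub_C, Finset.sum_const, smul_eq_mul, mul_one]
      rw [Finset.card_erase_of_mem hj, Finset.card_range]; omega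
    · intro j hj
      simp only [eval_mul, eval_C, eval_finsetSum, eval_prod, eval_sub, eval_X]
      rw [Finset.sum_eq_single_of_mem j hj]
      · rw [hw j hj]; ring
      · intro b hb hbj
        rw [Finset.prod_eq_zero (i := j) (by simp [Ne.symm hbj, hj] at *) (by simp)]
        simp
  have := congrArg (fun p => p.coeff i) hid
  simp only [coeff_C_mul, finsetSum_coeff] at this
  rw [this]
  exact Finset.dvd_sum fun j hj => (h j hj).mul_right _

lemma local_pt (P Q : ℤ[X]) (hcop : IsRelPrime P Q) (e : ℕ) (hP : P.natDegree ≤ e)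
    (hQ : Q.natDegree ≤ e) (p : ℕ) (hp : p.Prime) :
    ∃ j : ℕ, ¬ (((p ^ (e.factorial.factorization p + 1) : ℕ) : ℤ) ∣ P.eval (j : ℤ) ∧
      ((p ^ (e.factorial.factorization p + 1) : ℕ) : ℤ) ∣ Q.eval (j : ℤ)) := by
  by_contra! hcon
  set m : ℕ := p ^ (e.factorial.factorization p + 1) with hm
  have h1 := fact_coeff_dvd P e hP m (fun j _ => (hcon j).1)
  have h2 := fact_coeff_dvd Q e hQ m (fun j _ => (hcon j).2)
  have hpp : Prime (p : ℤ) := Nat.prime_iff_prime_int.mp hp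
  have hnot : ¬ ((m : ℤ) ∣ (e.factorial : ℤ)) := by
    intro h
    have h' : m ∣ e.factorial := by exact_mod_cast h
    exact Nat.pow_succ_factorization_not_dvd (Nat.factorial_ne_zero e) hp h'
  have key : ∀ c : ℤ, (m : ℤ) ∣ (e.factorial : ℤ) * c → (p : ℤ) ∣ c := by
    intro c hc
    by_contra hpc
    apply hnot
    have hco : IsCoprime (m : ℤ) c := by
      rw [hm]; push_cast
      exact ((Prime.coprime_iff_not_dvd hpp).mpr hpc).pow_left
    exact hco.dvd_of_dvd_mul_right hc
  have hu := hcop (d := C (p : ℤ)) ((C_dvd_iff_dvd_coeff _ _).mpr fun i => key _ (h1 i))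
    ((C_dvd_iff_dvd_coeff _ _).mpr fun i => key _ (h2 i))
  rw [isUnit_C] at hu
  exact hpp.not_isUnit hu

lemma bezout_int (P Q : ℤ[X]) (hQ : Q ≠ 0) (hres : resultant P Q ≠ 0) :
    ∃ R : ℤ, R ≠ 0 ∧ ∃ U W : ℤ[X], P * U + Q * W = C R := by
  by_cases h : P.natDegree ≠ 0 ∨ Q.natDegree ≠ 0
  · obtain ⟨U, W, -, -, h⟩ := exists_mul_add_mul_eq_C_resultant P Q le_rfl le_rfl h
    exact ⟨_, hres, U, W, h⟩
  · push Not at h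
    obtain ⟨b, hb⟩ := natDegree_eq_zero.mp h.2
    refine ⟨b, ?_, 0, 1, by simp [hb]⟩
    rintro rfl
    simp at hb; exact hQ hb.symm

lemma exists_pt (P Q : ℤ[X]) (hcop : IsRelPrime P Q) (hQ0 : Q ≠ 0)
    (hres : resultant P Q ≠ 0) (e : ℕ) (hP : P.natDegree ≤ e)
    (hQ : Q.natDegree ≤ e) :
    ∃ a : ℤ, Int.gcd (P.eval a) (Q.eval a) ∣ e.factorial := by
  obtain ⟨R, hR, U, W, hUW⟩ := bezout_int P Q hQ0 hres
  have hl : ∀ p : ℕ, ∃ j : ℕ, p.Prime → 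
     ¬ (((p ^ (e.factorial.factorization p + 1) : ℕ) : ℤ) ∣ P.eval (j : ℤ) ∧
      ((p ^ (e.factorial.factorization p + 1) : ℕ) : ℤ) ∣ Q.eval (j : ℤ)) := by
    intro p
    by_cases hp : p.Prime
    · obtain ⟨j, hj⟩ := local_pt P Q hcop e hP hQ p hp
      exact ⟨j, fun _ => hj⟩
    · exact ⟨0, fun h => absurd h hp⟩
  choose j hj using hl
  obtain ⟨a, ha⟩ := Nat.chineseRemainderOfFinset j
    (fun p => p ^ (e.factorial.factorization p + 1)) R.natAbs.primeFactors
    (fun p hp => pow_ne_zero _ (Nat.prime_of_mem_primeFactors hp).ne_zero)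
    (fun p hp q hq hpq => Nat.Coprime.pow _ _ ((Nat.coprime_primes
      (Nat.prime_of_mem_primeFactors hp) (Nat.prime_of_mem_primeFactors hq)).mpr hpq))
  refine ⟨a, ?_⟩
  have hgR : (Int.gcd (P.eval (a : ℤ)) (Q.eval (a : ℤ)) : ℤ) ∣ R := by
    have := congrArg (eval (a : ℤ)) hUW
    simp only [eval_add, eval_mul, eval_C] at this
    rw [← this]
    exact dvd_add ((Int.gcd_dvd_left ..).mul_right _) ((Int.gcd_dvd_right ..).mul_right _)
  have hg0 : Int.gcd (P.eval (a : ℤ)) (Q.eval (a : ℤ)) ≠ 0 := by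
    intro h
    rw [h] at hgR
    simp at hgR; exact hR hgR
  rw [← Nat.factorization_le_iff_dvd hg0 (Nat.factorial_ne_zero e)]
  intro p
  by_contra! hlt
  by_cases hp : p.Prime
  swap
  · simp [Nat.factorization_eq_zero_of_not_prime _ hp] at hlt
  have hd : p ^ (e.factorial.factorization p + 1) ∣ Int.gcd (P.eval (a : ℤ)) (Q.eval (a : ℤ)) :=
    (hp.pow_dvd_iff_le_factorization hg0).mpr hlt
  have hpR : p ∈ R.natAbs.primeFactors := by
    rw [Nat.mem_primeFactors]
    refine ⟨hp, ?_, by simpa using hR⟩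
    have h1 : p ∣ Int.gcd (P.eval (a : ℤ)) (Q.eval (a : ℤ)) :=
      (dvd_pow_self p (by omega)).trans hd
    exact h1.trans (by simpa using Int.natAbs_dvd_natAbs.mpr hgR)
  have hmod := ha p hpR
  have hdz : ((p ^ (e.factorial.factorization p + 1) : ℕ) : ℤ) ∣
      (Int.gcd (P.eval (a : ℤ)) (Q.eval (a : ℤ)) : ℤ) := by exact_mod_cast hd
  have hsub : ((p ^ (e.factorial.factorization p + 1) : ℕ) : ℤ) ∣ (j p : ℤ) - (a : ℤ) :=
    (Nat.modEq_iff_dvd).mp hmod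
  apply hj p hp
  constructor
  · have h1 := hsub.trans (sub_dvd_eval_sub (j p : ℤ) (a : ℤ) P)
    exact (dvd_sub_left (hdz.trans (Int.gcd_dvd_left ..))).mp h1
  · have h1 := hsub.trans (sub_dvd_eval_sub (j p : ℤ) (a : ℤ) Q)
    exact (dvd_sub_left (hdz.trans (Int.gcd_dvd_right ..))).mp h1

lemma coeff_prod_bound {ι : Type*} [DecidableEq ι] (s : Finset ι) (w z : ι → ℝ) (M : ℝ) (hM : 0 ≤ M)
    (hw : ∀ i ∈ s, |w i| ≤ 1) (hz : ∀ i ∈ s, |z i| ≤ M) (k : ℕ) :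
    |(∏ i ∈ s, (C (w i) * (X - C (z i)))).coeff k| ≤ (1 + M) ^ s.card := by
  induction s using Finset.induction_on generalizing k with
  | empty =>
    simp only [Finset.prod_empty, Finset.card_empty, pow_zero, coeff_one]
    split_ifs <;> simp
  | insert a s ha ih =>
    rw [Finset.prod_insert ha, Finset.card_insert_of_notMem ha]
    have ih' := ih (fun i hi => hw i (Finset.mem_insert_of_mem hi))
      (fun i hi => hz i (Finset.mem_insert_of_mem hi))
    set f := ∏ i ∈ s, (C (w i) * (X - C (z i))) with hf
    have hpos : 0 ≤ (1 + M) ^ s.card := by positivity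
    have h1 : |(X * f).coeff k| ≤ (1 + M) ^ s.card := by
      cases k with
      | zero => simpa using hpos
      | succ k => rw [coeff_X_mul]; exact ih' k
    rw [mul_assoc, coeff_C_mul, sub_mul, coeff_sub, coeff_C_mul, abs_mul]
    have h2 : |z a * f.coeff k| ≤ M * (1 + M) ^ s.card := by
      rw [abs_mul]
      exact mul_le_mul (hz a (Finset.mem_insert_self ..)) (ih' k) (abs_nonneg _) hM
    calc |w a| * |(X * f).coeff k - z a * f.coeff k|
        ≤ 1 * (|(X * f).coeff k| + |z a * f.coeff k|) :=
          mul_le_mul (hw a (Finset.mem_insert_self ..)) (abs_sub _ _) (abs_nonneg _) zero_le_one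
      _ ≤ (1 + M) ^ (s.card + 1) := by rw [pow_succ]; linarith

lemma interp_bound (P : ℤ[X]) (d : ℕ) (hP : P.natDegree ≤ d) (T : Finset ℤ) (hT : T.card = d + 1)
    (M B : ℝ) (hM : 0 ≤ M) (hB : 0 ≤ B) (hz : ∀ y ∈ T, |(y : ℝ)| ≤ M)
    (hv : ∀ y ∈ T, |((P.eval y : ℤ) : ℝ)| ≤ B) (k : ℕ) :
    |(P.coeff k : ℝ)| ≤ (d + 1) * (B * (1 + M) ^ d) := by
  have hint : P.map (Int.castRingHom ℝ) = Lagrange.interpolate T (fun y : ℤ => (y : ℝ))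
      (fun y => ((P.eval y : ℤ) : ℝ)) := by
    apply Lagrange.eq_interpolate_of_eval_eq
    · intro a _ b _ hab; exact Int.cast_injective hab
    · rw [hT]
      exact (degree_le_of_natDegree_le ((natDegree_map_le).trans hP)).trans_lt
        (by exact_mod_cast Nat.lt_succ_self d)
    · intro y hy
      exact eval_intCast_map (Int.castRingHom ℝ) P y
  have h := congrArg (fun p => p.coeff k) hint
  simp only [coeff_map, Lagrange.interpolate_apply, finsetSum_coeff, coeff_C_mul] at h
  have h' : (P.coeff k : ℝ) = (Int.castRingHom ℝ) (P.coeff k) := rfl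
  rw [h', h]
  refine (Finset.abs_sum_le_sum_abs _ _).trans ?_
  have : ∀ y ∈ T, |((P.eval y : ℤ) : ℝ) * (Lagrange.basis T (fun y : ℤ => (y : ℝ)) y).coeff k|
      ≤ B * (1 + M) ^ d := by
    intro y hy
    rw [abs_mul]
    refine mul_le_mul (hv y hy) ?_ (abs_nonneg _) hB
    have := coeff_prod_bound (T.erase y) (fun x : ℤ => ((y : ℝ) - x)⁻¹) (fun x : ℤ => (x : ℝ)) M hM
      ?_ (fun i hi => hz i (Finset.mem_of_mem_erase hi)) k
    · rw [Finset.card_erase_of_mem hy, hT, Nat.add_sub_cancel] at this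
      exact this
    · intro i hi
      rw [abs_inv]
      apply inv_le_one_of_one_le₀
      have : y - i ≠ 0 := sub_ne_zero.mpr (Finset.ne_of_mem_erase hi).symm
      exact_mod_cast Int.one_le_abs this
  refine (Finset.sum_le_card_nsmul _ _ _ this).trans ?_
  rw [hT, nsmul_eq_mul]; push_cast; exact le_rfl

lemma res_bound (P Q : ℤ[X]) (B : ℝ) (hB : 0 ≤ B) (hP : ∀ i, |(P.coeff i : ℝ)| ≤ B)
    (hQ : ∀ i, |(Q.coeff i : ℝ)| ≤ B) :
    |((resultant P Q : ℤ) : ℝ)| ≤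
      ((P.natDegree + Q.natDegree).factorial : ℝ) * B ^ (P.natDegree + Q.natDegree) := by
  rw [resultant]
  have h := Matrix.det_le (A := (sylvester P Q P.natDegree Q.natDegree).map (Int.castRingHom ℝ))
    (abv := AbsoluteValue.abs) (x := B) ?_
  · rw [← RingHom.mapMatrix_apply, ← RingHom.map_det] at h
    simpa [nsmul_eq_mul] using h
  · intro i j
    rw [Matrix.map_apply, sylvester, Matrix.of_apply]
    induction j using Fin.addCases with
    | left j =>
      simp only [Fin.addCases_left]
      split_ifs
      · exact hQ _
      · simpa using hB
    | right j =>
      simp only [Fin.addCases_right]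
      split_ifs
      · exact hP _
      · simpa using hB

lemma vand_bound (N : ℕ) (hN : 1 ≤ N) (a : ℤ) :
    |(((Matrix.vandermonde fun i : Fin N => a + (i : ℤ)).det : ℤ) : ℝ)| ≤ (N : ℝ) ^ (N * N) := by
  have h0 : (Matrix.vandermonde fun i : Fin N => a + (i : ℤ)).det
      = (Matrix.vandermonde fun i : Fin N => (i : ℤ)).det := by
    simp [Matrix.det_vandermonde]
  rw [h0, Matrix.det_vandermonde]
  push_cast
  rw [Finset.abs_prod, mul_comm N N, pow_mul]
  have hN' : (1 : ℝ) ≤ N := by exact_mod_cast hN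
  have : ∀ i : Fin N, |∏ j ∈ Finset.Ioi i, (((j : ℕ) : ℝ) - ((i : ℕ) : ℝ))| ≤ (N : ℝ) ^ N := by
    intro i
    rw [Finset.abs_prod]
    calc ∏ j ∈ Finset.Ioi i, |((j : ℕ) : ℝ) - ((i : ℕ) : ℝ)|
        ≤ ∏ j ∈ Finset.Ioi i, (N : ℝ) := by
          refine Finset.prod_le_prod (fun _ _ => abs_nonneg _) fun j _ => ?_
          have h1 : ((j : ℕ) : ℝ) ≤ N := by exact_mod_cast j.2.le
          have h2 : ((i : ℕ) : ℝ) ≤ N := by exact_mod_cast i.2.le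
          have h3 : (0 : ℝ) ≤ ((j : ℕ) : ℝ) := by positivity
          have h4 : (0 : ℝ) ≤ ((i : ℕ) : ℝ) := by positivity
          rw [abs_le]; constructor <;> linarith
      _ ≤ (N : ℝ) ^ N := by
          rw [Finset.prod_const]
          apply pow_le_pow_right₀ hN'
          simpa using Finset.card_le_univ (Finset.Ioi i)
  calc _ ≤ ∏ i : Fin N, (N : ℝ) ^ N :=
        Finset.prod_le_prod (fun _ _ => abs_nonneg _) fun i _ => this i
    _ = _ := by simp

lemma res_ne_zero (P Q : ℤ[X]) (hcop : IsRelPrime P Q) (hQ : Q ≠ 0) : resultant P Q ≠ 0 := by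
  intro h
  have h1 : resultant (P.map (Int.castRingHom ℚ)) (Q.map (Int.castRingHom ℚ)) = 0 := by
    have := resultant_map_map P Q P.natDegree Q.natDegree (Int.castRingHom ℚ)
    rw [h, map_zero] at this
    rwa [natDegree_map_eq_of_injective Int.cast_injective,
      natDegree_map_eq_of_injective Int.cast_injective]
  rw [resultant_eq_zero_iff] at h1
  apply h1.2
  have hinj : Function.Injective (Int.castRingHom ℚ) := Int.cast_injective
  apply isCoprime_of_dvd
  · rintro ⟨-, h2⟩
    exact hQ ((Polynomial.map_eq_zero_iff hinj).mp h2)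
  · intro D hD hD0 hDP hDQ
    apply hD
    apply isUnit_or_eq_zero_of_isUnit_integerNormalization_primPart (R := ℤ) hD0
    obtain ⟨b, hb, hb'⟩ := IsLocalization.integerNormalization_spec (nonZeroDivisors ℤ) D
    set D1 := IsLocalization.integerNormalization (nonZeroDivisors ℤ) D with hD1
    have hb0 : (b : ℚ) ≠ 0 := by exact_mod_cast nonZeroDivisors.ne_zero hb
    have hprim : D1.primPart.IsPrimitive := D1.isPrimitive_primPart
    have hdvd : D1.primPart.map (Int.castRingHom ℚ) ∣ D := by
      have h3 : D1.primPart.map (Int.castRingHom ℚ) ∣ D1.map (Int.castRingHom ℚ) :=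
        Polynomial.map_dvd _ D1.primPart_dvd
      have h4 : D1.map (Int.castRingHom ℚ) = C (b : ℚ) * D := by
        have : D1.map (Int.castRingHom ℚ) = b • D := hb'
        rw [this, zsmul_eq_mul]; simp
      rw [h4] at h3
      have hu : IsUnit (C (b : ℚ)) := isUnit_C.mpr hb0.isUnit
      rwa [hu.dvd_mul_left] at h3
    exact hcop ((IsPrimitive.Int.dvd_iff_map_cast_dvd_map_cast _ _ hprim).mpr (hdvd.trans hDP))
      ((IsPrimitive.Int.dvd_iff_map_cast_dvd_map_cast _ _ hprim).mpr (hdvd.trans hDQ))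

lemma block (V : Finset ℤ) (N : ℕ) (hN : 1 ≤ N) :
    ∃ a : ℤ, 0 ≤ a ∧ a + N ≤ N * (V.card + 1) ∧ ∀ i : ℕ, i < N → a + i ∉ V := by
  have : ∃ j ∈ Finset.range (V.card + 1), j ∉ V.image (fun x => (x / (N : ℤ)).toNat) := by
    apply Finset.exists_mem_notMem_of_card_lt_card
    rw [Finset.card_range]
    exact Nat.lt_succ_of_le Finset.card_image_le
  obtain ⟨j, hj, hjV⟩ := this
  rw [Finset.mem_range] at hj
  refine ⟨j * N, by positivity, ?_, ?_⟩
  · have : ((j : ℤ) + 1) ≤ V.card + 1 := by omega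
    nlinarith
  · intro i hi hV
    apply hjV
    rw [Finset.mem_image]
    refine ⟨_, hV, ?_⟩
    have : ((j : ℤ) * N + i) / N = j := by
      rw [mul_comm, Int.mul_add_ediv_left _ _ (by omega), Int.ediv_eq_zero_of_lt (by omega) (by omega)]
      simp
    rw [this]; simp


lemma height_gcd (p q : ℤ) (hq : q ≠ 0) (b : ℝ) (h : ratHeight ((p : ℚ) / (q : ℚ)) ≤ b) :
    |(p : ℝ)| ≤ Real.exp b * (Int.gcd p q : ℝ) ∧ |(q : ℝ)| ≤ Real.exp b * (Int.gcd p q : ℝ) := by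
  set r : ℚ := (p : ℚ) / (q : ℚ) with hr
  have hden : (0 : ℝ) < r.den := by exact_mod_cast r.den_pos
  have hmax : max |(r.num : ℝ)| (r.den : ℝ) ≤ Real.exp b := by
    rwa [← Real.log_le_iff_le_exp (lt_max_of_lt_right hden)]
  have hcross : p * r.den = r.num * q := by
    have h1 : (r.num : ℚ) / r.den = (p : ℚ) / q := by rw [Rat.num_div_den]
    rw [div_eq_div_iff (by exact_mod_cast r.den_ne_zero) (by exact_mod_cast hq)] at h1
    exact_mod_cast h1.symm
  have hdq : (r.den : ℤ) ∣ q := by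
    have : IsCoprime (r.den : ℤ) r.num := by
      rw [Int.isCoprime_iff_gcd_eq_one, Int.gcd_comm]
      exact r.reduced
    exact this.dvd_of_dvd_mul_left (Dvd.intro_left _ hcross)
  obtain ⟨k, hk⟩ := hdq
  have hpk : p = r.num * k := by
    have : (r.den : ℤ) ≠ 0 := by exact_mod_cast r.den_ne_zero
    apply mul_right_cancel₀ this
    rw [hcross, hk]; ring
  have hkg : |(k : ℝ)| ≤ (Int.gcd p q : ℝ) := by
    have h1 : k ∣ (Int.gcd p q : ℤ) := Int.dvd_coe_gcd (Dvd.intro_left _ hpk.symm) (Dvd.intro_left _ hk.symm)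
    have h2 : (0 : ℤ) < (Int.gcd p q : ℤ) := by
      exact_mod_cast Int.gcd_pos_of_ne_zero_right _ hq
    have := Int.le_of_dvd h2 ((abs_dvd _ _).mpr h1)
    exact_mod_cast this
  constructor
  · have : (p : ℝ) = r.num * k := by exact_mod_cast hpk
    rw [this, abs_mul]
    exact mul_le_mul ((le_max_left _ _).trans hmax) hkg (abs_nonneg _) (Real.exp_nonneg _)
  · have : (q : ℝ) = r.den * k := by exact_mod_cast hk
    rw [this, abs_mul, abs_of_pos hden]
    exact mul_le_mul ((le_max_right _ _).trans hmax) hkg (abs_nonneg _) (Real.exp_nonneg _)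

lemma coeff_bdd (P : ℤ[X]) : BddAbove (Set.range fun i => |(P.coeff i : ℝ)|) := by
  apply Set.Finite.bddAbove
  apply (Set.Finite.insert 0 (P.support.finite_toSet.image fun i => |(P.coeff i : ℝ)|)).subset
  rintro _ ⟨i, rfl⟩
  by_cases h : P.coeff i = 0
  · left; simp [h]
  · right; exact ⟨i, by simpa using h, rfl⟩

/-- Sum of the logarithms of the gcds over a block of `8 d` consecutive integers. -/
lemma sum_log_gcd (P Q : ℤ[X]) (hcop : IsRelPrime P Q) (hQ : Q ≠ 0) (d : ℕ) (hd : 1 ≤ d)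
    (hPd : P.natDegree ≤ d) (hQd : Q.natDegree ≤ d) (B : ℝ) (hB : 1 ≤ B)
    (hPB : ∀ i, |(P.coeff i : ℝ)| ≤ B) (hQB : ∀ i, |(Q.coeff i : ℝ)| ≤ B) (a : ℤ)
    (hne : ∀ i : ℕ, i < 8 * d → Q.eval (a + i) ≠ 0) :
    ∑ i ∈ Finset.range (8 * d), Real.log (Int.gcd (P.eval (a + i)) (Q.eval (a + i)) : ℝ) ≤
      8 * d * (d * Real.log d) + 2 * d * Real.log (2 * d) + 2 * d * Real.log B
        + (8 * d) * (8 * d) * Real.log (8 * d) := by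
  have hres := res_ne_zero P Q hcop hQ
  obtain ⟨a', ha'⟩ := exists_pt P Q hcop hQ hres d hPd hQd
  obtain ⟨n, hn⟩ : ∃ n, n + (P.natDegree + Q.natDegree) = 8 * d :=
    ⟨8 * d - (P.natDegree + Q.natDegree), by omega⟩
  have hk := key1 P Q n a' (fun i => a + (i : ℤ))
  have hvne : (Matrix.vandermonde (fun i : Fin (n + (P.natDegree + Q.natDegree)) =>
      a + (i : ℤ))).det ≠ 0 := by
    rw [Matrix.det_vandermonde_ne_zero_iff]
    intro i j hij
    ext
    simpa using hij
  have hvb := vand_bound (n + (P.natDegree + Q.natDegree)) (by omega) a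
  have hrb := res_bound P Q B (by linarith) hPB hQB
  have hg0 : Int.gcd (P.eval a') (Q.eval a') ≠ 0 := by
    intro h; rw [h] at ha'
    exact Nat.factorial_ne_zero d (Nat.eq_zero_of_zero_dvd ha')
  have hgb : Int.gcd (P.eval a') (Q.eval a') ≤ d ^ d :=
    (Nat.le_of_dvd (Nat.factorial_pos d) ha').trans (Nat.factorial_le_pow d)
  -- the inequality of absolute values
  have hle := Int.le_of_dvd (abs_pos.mpr (mul_ne_zero (mul_ne_zero
    (pow_ne_zero n (Int.natCast_ne_zero.mpr hg0)) hres) hvne)) ((dvd_abs _ _).mpr hk)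
  have hleR : (∏ i : Fin (n + (P.natDegree + Q.natDegree)),
      (Int.gcd (P.eval (a + (i : ℤ))) (Q.eval (a + (i : ℤ))) : ℝ)) ≤
      (Int.gcd (P.eval a') (Q.eval a') : ℝ) ^ n * |((resultant P Q : ℤ) : ℝ)| *
        |(((Matrix.vandermonde (fun i : Fin (n + (P.natDegree + Q.natDegree)) =>
          a + (i : ℤ))).det : ℤ) : ℝ)| := by
    have : |(Int.gcd (P.eval a') (Q.eval a') : ℤ)| = (Int.gcd (P.eval a') (Q.eval a') : ℤ) :=
      abs_of_nonneg (by positivity)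
    rw [abs_mul, abs_mul, abs_pow, this] at hle
    exact_mod_cast hle
  set V := |(((Matrix.vandermonde (fun i : Fin (n + (P.natDegree + Q.natDegree)) =>
          a + (i : ℤ))).det : ℤ) : ℝ)| with hV
  have hVpos : 0 < V := abs_pos.mpr (by exact_mod_cast hvne)
  have hRpos : 0 < |((resultant P Q : ℤ) : ℝ)| := abs_pos.mpr (by exact_mod_cast hres)
  have hgpos : 0 < (Int.gcd (P.eval a') (Q.eval a') : ℝ) := by
    exact_mod_cast Nat.pos_of_ne_zero hg0
  have hterm : ∀ i : ℕ, i < 8 * d →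
      (Int.gcd (P.eval (a + (i : ℤ))) (Q.eval (a + (i : ℤ))) : ℝ) ≠ 0 := by
    intro i hi
    have := Int.gcd_pos_of_ne_zero_right (P.eval (a + (i : ℤ))) (hne i hi)
    exact_mod_cast this.ne'
  have hlog : ∑ i ∈ Finset.range (8 * d),
      Real.log (Int.gcd (P.eval (a + i)) (Q.eval (a + i)) : ℝ) =
      Real.log (∏ i : Fin (n + (P.natDegree + Q.natDegree)),
      (Int.gcd (P.eval (a + (i : ℤ))) (Q.eval (a + (i : ℤ))) : ℝ)) := by
    rw [Fin.prod_univ_eq_prod_range (fun i : ℕ =>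
      (Int.gcd (P.eval (a + (i : ℤ))) (Q.eval (a + (i : ℤ))) : ℝ)), hn, Real.log_prod]
    intro i hi
    exact hterm i (Finset.mem_range.mp hi)
  have hprodpos : 0 < ∏ i : Fin (n + (P.natDegree + Q.natDegree)),
      (Int.gcd (P.eval (a + (i : ℤ))) (Q.eval (a + (i : ℤ))) : ℝ) := by
    apply Finset.prod_pos
    intro i _
    exact lt_of_le_of_ne (by positivity) (hterm i (by rw [← hn]; exact i.2)).symm
  have hl2 := Real.log_le_log hprodpos hleR
  rw [Real.log_mul (by positivity) hVpos.ne', Real.log_mul (by positivity) hRpos.ne',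
    Real.log_pow] at hl2
  rw [hlog]
  have hd1 : (1 : ℝ) ≤ d := by exact_mod_cast hd
  have hld : 0 ≤ Real.log d := Real.log_nonneg hd1
  have e1 : (n : ℝ) * Real.log (Int.gcd (P.eval a') (Q.eval a') : ℝ)
      ≤ 8 * d * (d * Real.log d) := by
    have h1 : Real.log (Int.gcd (P.eval a') (Q.eval a') : ℝ) ≤ d * Real.log d := by
      rw [← Real.log_pow]
      exact Real.log_le_log hgpos (by exact_mod_cast hgb)
    have h2 : (n : ℝ) ≤ 8 * d := by exact_mod_cast (by omega : n ≤ 8 * d)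
    calc (n : ℝ) * Real.log (Int.gcd (P.eval a') (Q.eval a') : ℝ)
        ≤ n * (d * Real.log d) := mul_le_mul_of_nonneg_left h1 (by positivity)
      _ ≤ _ := mul_le_mul_of_nonneg_right h2 (by positivity)
  have hm : P.natDegree + Q.natDegree ≤ 2 * d := by omega
  have e2 : Real.log |((resultant P Q : ℤ) : ℝ)|
      ≤ 2 * d * Real.log (2 * d) + 2 * d * Real.log B := by
    have h1 : |((resultant P Q : ℤ) : ℝ)| ≤ (2 * d : ℝ) ^ (2 * d) * B ^ (2 * d) := by
      refine hrb.trans (mul_le_mul ?_ (pow_le_pow_right₀ hB hm) (by positivity) (by positivity))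
      have := (Nat.factorial_le hm).trans (Nat.factorial_le_pow (2 * d))
      exact_mod_cast this
    have h2 := Real.log_le_log hRpos h1
    rw [Real.log_mul (by positivity) (by positivity), Real.log_pow, Real.log_pow] at h2
    push_cast at h2
    exact h2
  have e3 : Real.log V ≤ (8 * d) * (8 * d) * Real.log (8 * d) := by
    rw [hn] at hvb
    have h2 := Real.log_le_log hVpos hvb
    rw [Real.log_pow] at h2
    push_cast at h2
    exact h2
  linarith

/-- Markov: many indices have a small value. -/
lemma many_small (f : ℕ → ℝ) (N : ℕ) (S : ℝ) (hS : 0 < S)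
    (hf : ∀ i < 2 * N, 0 ≤ f i) (h : ∑ i ∈ Finset.range (2 * N), f i ≤ N * S) :
    N ≤ ((Finset.range (2 * N)).filter fun i => f i ≤ S).card := by
  by_contra! hlt
  have hcard := Finset.card_filter_add_card_filter_not (s := Finset.range (2 * N)) (fun i => f i ≤ S)
  rw [Finset.card_range] at hcard
  set b := ((Finset.range (2 * N)).filter fun i => ¬ f i ≤ S) with hb
  have h1 : (b.card : ℝ) * S ≤ ∑ i ∈ b, f i := by
    rw [← nsmul_eq_mul]
    apply Finset.card_nsmul_le_sum
    intro i hi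
    rw [hb, Finset.mem_filter] at hi
    exact (not_le.mp hi.2).le
  have h2 : ∑ i ∈ b, f i ≤ ∑ i ∈ Finset.range (2 * N), f i :=
    Finset.sum_le_sum_of_subset_of_nonneg (Finset.filter_subset _ _)
      (fun i hi _ => hf i (Finset.mem_range.mp hi))
  have h3 : (N : ℝ) + 1 ≤ b.card := by exact_mod_cast (by omega : N + 1 ≤ b.card)
  nlinarith

lemma final_arith (c d L v H ld B1 : ℝ) (hc : 1 ≤ c) (hd : 1 ≤ d) (hL : 1 ≤ L) (hv : 0 ≤ v) (lc : ℝ)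
    (hlc : 0 ≤ lc) (hld : ld ≤ L)
    (h : H ≤ ld + c * (1 + d * (3 * L + v)) + B1 + d * (3 * L + v))
    (hB1 : B1 ≤ 34 * (d * L) + L + H / 2) :
    H ≤ (4 * c + 1923) * (12 + v + 2 * lc) * d * L := by
  have hdL : 1 ≤ d * L := by nlinarith
  have h1 : d * v ≤ d * L * v := by
    have : 0 ≤ d * v := by positivity
    nlinarith
  have h2 : L ≤ d * L := by nlinarith
  have h3 : 0 ≤ d * L * v := by positivity
  have h4 : c * (1 + d * (3 * L + v)) ≤ c * (4 * (d * L) + d * L * v) := by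
    apply mul_le_mul_of_nonneg_left _ (by linarith); nlinarith
  have h5 : H ≤ (2 * (39 + v + c * (4 + v))) * (d * L) := by nlinarith
  refine h5.trans ?_
  rw [mul_assoc _ d L]
  apply mul_le_mul_of_nonneg_right _ (by linarith)
  have : 0 ≤ c * v := by positivity
  have : 0 ≤ c * lc := by positivity
  nlinarith

/-- Let `c ≥ 1` and let `F = P/Q ∈ ℚ(X)` (with `P, Q ∈ ℤ[X]` coprime, i.e.
in lowest terms) have degree at most `d ≥ 1`. Let `V ⊂ ℤ` be a finite set such that `F` has
no poles in `ℤ \ V`. Assume `h(F(x)) ≤ c·max{1, d·log d + d·h(x)}` for every integer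
`x ∉ V`. Then `h(F) ≤ C·d·log(4d)` with
`C = (4c+1923)·(12 + log max{1, #V} + 2·log c)`. -/
theorem stmt_19 (c : ℝ) (hc : 1 ≤ c)
    (P Q : Polynomial ℤ) (hcop : IsRelPrime P Q) (hQ : Q ≠ 0)
    (d : ℕ) (hd : 1 ≤ d) (hdeg : max P.natDegree Q.natDegree ≤ d)
    (V : Finset ℤ) (hpoles : ∀ x : ℤ, x ∉ V → Q.eval x ≠ 0)
    (hval : ∀ x : ℤ, x ∉ V →
      ratHeight (((P.eval x : ℤ) : ℚ) / ((Q.eval x : ℤ) : ℚ)) ≤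
        c * max 1 ((d : ℝ) * Real.log (d : ℝ) + (d : ℝ) * Real.log (max 1 |(x : ℝ)|)))
    (C : ℝ) (hC : C = (4 * c + 1923) * (12 + Real.log (max 1 (V.card : ℝ)) + 2 * Real.log c)) :
    fracHeight P Q ≤ C * (d : ℝ) * Real.log (4 * (d : ℝ)) := by
  have hPd : P.natDegree ≤ d := (le_max_left _ _).trans hdeg
  have hQd : Q.natDegree ≤ d := (le_max_right _ _).trans hdeg
  unfold fracHeight
  set B := max (⨆ i, |(P.coeff i : ℝ)|) (⨆ i, |(Q.coeff i : ℝ)|) with hBdef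
  have hPB : ∀ i, |(P.coeff i : ℝ)| ≤ B := fun i =>
    (le_ciSup (coeff_bdd P) i).trans (le_max_left _ _)
  have hQB : ∀ i, |(Q.coeff i : ℝ)| ≤ B := fun i =>
    (le_ciSup (coeff_bdd Q) i).trans (le_max_right _ _)
  have hB1 : 1 ≤ B := by
    refine le_trans ?_ (hQB Q.natDegree)
    exact_mod_cast Int.one_le_abs (leadingCoeff_ne_zero.mpr hQ)
  have hd1 : (1 : ℝ) ≤ d := by exact_mod_cast hd
  obtain ⟨a, ha0, haM, haV⟩ := block V (8 * d) (by omega)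
  set v : ℝ := max 1 (V.card : ℝ) with hv
  have hv1 : 1 ≤ v := le_max_left _ _
  have hVv : (V.card : ℝ) ≤ v := le_max_right _ _
  have hlv : 0 ≤ Real.log v := Real.log_nonneg hv1
  have hl4 : 1 ≤ Real.log 4 := by
    rw [Real.le_log_iff_exp_le (by norm_num)]
    have := Real.exp_one_lt_d9; linarith
  set L := Real.log (4 * (d : ℝ)) with hL
  have hLd : L = Real.log 4 + Real.log d := by
    rw [hL, Real.log_mul (by norm_num) (by positivity)]
  have hld : 0 ≤ Real.log d := Real.log_nonneg hd1
  have h8 : Real.log 2 ≤ Real.log 4 := Real.log_le_log (by norm_num) (by norm_num)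
  have h82 : Real.log 8 = Real.log 4 + Real.log 2 := by
    rw [← Real.log_mul (by norm_num) (by norm_num)]; norm_num
  have hlB : 0 ≤ Real.log B := Real.log_nonneg hB1
  have hsum := sum_log_gcd P Q hcop hQ d hd hPd hQd B hB1 hPB hQB a
    (fun i hi => hpoles _ (haV i hi))
  -- the threshold
  set S : ℝ := 34 * (d * L) + L + Real.log B / 2 with hS
  have hL1 : 1 ≤ L := by linarith
  have hSpos : 0 < S := by
    have : 0 < d * L := by positivity
    linarith
  have hsum' : ∑ i ∈ Finset.range (2 * (4 * d)),
      Real.log (Int.gcd (P.eval (a + i)) (Q.eval (a + i)) : ℝ) ≤ ((4 * d : ℕ) : ℝ) * S := by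
    rw [show 2 * (4 * d) = 8 * d by ring]
    refine hsum.trans ?_
    have h1 : Real.log (2 * d) ≤ L := Real.log_le_log (by positivity) (by linarith)
    have h2 : Real.log (8 * d) ≤ 2 * L := by
      rw [Real.log_mul (by norm_num) (by positivity)]; linarith
    have h3 : Real.log d ≤ L := by linarith
    have g1 : 8 * d * (d * Real.log d) ≤ 8 * d * (d * L) := by gcongr
    have g2 : 2 * d * Real.log (2 * d) ≤ 2 * d * L := by gcongr
    have g3 : (8 * d) * (8 * d) * Real.log (8 * d) ≤ (8 * d) * (8 * d) * (2 * L) := by gcongr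
    have g4 : 0 ≤ d * L := by positivity
    push_cast
    rw [hS]
    nlinarith
  have hmany := many_small (fun i => Real.log (Int.gcd (P.eval (a + i)) (Q.eval (a + i)) : ℝ))
    (4 * d) S hSpos (fun i _ => Real.log_natCast_nonneg _) hsum'
  set G := (Finset.range (2 * (4 * d))).filter fun i : ℕ =>
    Real.log (Int.gcd (P.eval (a + i)) (Q.eval (a + i)) : ℝ) ≤ S with hG
  obtain ⟨T0, hT0, hT0c⟩ := Finset.exists_subset_card_eq (show d + 1 ≤ G.card by omega)
  set T : Finset ℤ := T0.image (fun i : ℕ => a + (i : ℤ)) with hT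
  have hTc : T.card = d + 1 := by
    rw [hT, Finset.card_image_of_injective _ (fun i j hij => by simpa using hij), hT0c]
  set M : ℝ := 16 * d * v with hM
  have hM1 : 1 ≤ M := by
    rw [hM]; nlinarith
  set E : ℝ := c * (1 + d * (3 * L + Real.log v)) + S with hE
  have hpt : ∀ y ∈ T, |(y : ℝ)| ≤ M ∧ |((P.eval y : ℤ) : ℝ)| ≤ Real.exp E ∧
      |((Q.eval y : ℤ) : ℝ)| ≤ Real.exp E := by
    intro y hy
    rw [hT, Finset.mem_image] at hy
    obtain ⟨i, hi, rfl⟩ := hy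
    have hi' := hT0 hi
    rw [hG, Finset.mem_filter, Finset.mem_range] at hi'
    have hiV := haV i (by omega)
    have hyM : |((a + (i : ℤ) : ℤ) : ℝ)| ≤ M := by
      rw [abs_of_nonneg (by exact_mod_cast (by omega : 0 ≤ a + (i : ℤ)))]
      have h1 : a + (i : ℤ) ≤ (8 * d : ℕ) * (V.card + 1) := by omega
      have h2 : ((a + (i : ℤ) : ℤ) : ℝ) ≤ 8 * d * (V.card + 1) := by exact_mod_cast h1
      refine h2.trans ?_
      rw [hM]
      have : 8 * (d : ℝ) * (V.card + 1) ≤ 8 * d * (2 * v) := by gcongr; linarith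
      linarith
    have hlM : Real.log (max 1 |((a + (i : ℤ) : ℤ) : ℝ)|) ≤ 2 * L + Real.log v := by
      have h1 := Real.log_le_log (by positivity) (max_le hM1 hyM)
      have h2 : Real.log M = L + Real.log 4 + Real.log v := by
        rw [hM, hL, ← Real.log_mul (by positivity) (by positivity),
          ← Real.log_mul (by positivity) (by positivity)]
        congr 1; ring
      linarith
    have hb : ratHeight (((P.eval (a + (i : ℤ)) : ℤ) : ℚ) / ((Q.eval (a + (i : ℤ)) : ℤ) : ℚ)) ≤
        c * (1 + d * (3 * L + Real.log v)) := by
      refine (hval _ hiV).trans (mul_le_mul_of_nonneg_left ?_ (by linarith))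
      have : (d : ℝ) * Real.log d + d * Real.log (max 1 |((a + (i : ℤ) : ℤ) : ℝ)|) ≤
          d * (3 * L + Real.log v) := by
        rw [← mul_add]
        apply mul_le_mul_of_nonneg_left _ (by linarith)
        linarith
      apply max_le
      · have : 0 ≤ d * (3 * L + Real.log v) := by positivity
        linarith
      · linarith
    have hgp : (0 : ℝ) < (Int.gcd (P.eval (a + (i : ℤ))) (Q.eval (a + (i : ℤ))) : ℝ) := by
      exact_mod_cast Int.gcd_pos_of_ne_zero_right _ (hpoles _ hiV)
    have hgS : (Int.gcd (P.eval (a + (i : ℤ))) (Q.eval (a + (i : ℤ))) : ℝ) ≤ Real.exp S := by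
      rw [← Real.log_le_iff_le_exp hgp]; exact hi'.2
    obtain ⟨k1, k2⟩ := height_gcd _ _ (hpoles _ hiV) _ hb
    refine ⟨hyM, k1.trans ?_, k2.trans ?_⟩ <;>
    · rw [hE, Real.exp_add]
      exact mul_le_mul_of_nonneg_left hgS (Real.exp_nonneg _)
  have hBle : B ≤ (d + 1) * (Real.exp E * (1 + M) ^ d) := by
    apply max_le
    · exact ciSup_le fun k => interp_bound P d hPd T hTc M _ (by linarith) (Real.exp_nonneg _)
        (fun y hy => (hpt y hy).1) (fun y hy => (hpt y hy).2.1) k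
    · exact ciSup_le fun k => interp_bound Q d hQd T hTc M _ (by linarith) (Real.exp_nonneg _)
        (fun y hy => (hpt y hy).1) (fun y hy => (hpt y hy).2.2) k
  have hfin := Real.log_le_log (by linarith) hBle
  rw [Real.log_mul (by positivity) (by positivity), Real.log_mul (by positivity) (by positivity),
    Real.log_exp, Real.log_pow] at hfin
  have h1M : Real.log (1 + M) ≤ 3 * L + Real.log v := by
    have h1 := Real.log_le_log (by positivity) (show 1 + M ≤ 4 * d * 8 * v by linarith)
    rw [Real.log_mul (by positivity) (by positivity), Real.log_mul (by positivity) (by positivity)]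
      at h1
    linarith
  have hdM := mul_le_mul_of_nonneg_left h1M (by linarith : (0 : ℝ) ≤ d)
  rw [hC]
  refine final_arith c d L (Real.log v) (Real.log B) (Real.log (d + 1)) S hc hd1 hL1 hlv
    (Real.log c) (Real.log_nonneg hc) (Real.log_le_log (by positivity) (by linarith)) ?_ le_rfl
  linarith
end
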